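/- arXiv:2005.04521 — 4 statements merged into one kernel-verified Lean document; each statement's English description precedes it below -/
import Mathlib

section
/- Let K be a number field with ring of integers O_K. For a nonzero ideal I of O_K let N(I) = #(O_K/I) and φ_K(I) = #(O_K/I)^×. Then for every complex number s with Re(s) > 1, ∑_I φ_K(I)^{−s} = (∑_I N(I)^{−s}) · ∏_P (1 + (N(P)−1)^{−s} − N(P)^{−s}), where both sums run over all nonzero ideals I of O_K, the product runs over all nonzero prime ideals P of O_K, and all powers are principal-branch complex powers; moreover both sums and the product converge for such s. -/
open NumberField

/-!
Reducing modulo each prime `P ∣ J` shows that `φ(J) / N(J)` is the product of the `φ(P) / N(P)`.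
With `u(P) = φ(P)^{-s} / N(P)^{-s}` this reads `φ(J)^{-s} = N(J)^{-s} ∏_{P ∣ J} (1 + (u(P) - 1))`.
Expanding the product turns the totient zeta function into a sum over pairs `(J, S)` with `S` a set
of primes dividing `J`. Such pairs are the same as arbitrary pairs `(I, S)` through
`J = I ∏_{P ∈ S} P`, and as `N` is multiplicative the sum over the latter factors as
`(∑_I N(I)^{-s}) · ∑_S ∏_{P ∈ S} N(P)^{-s} (u(P) - 1)`, whose second factor is the Euler product.
Everything converges absolutely because `1/2 ≤ φ(P) / N(P) ≤ 1` keeps `u(P)` bounded.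
-/

section UnitsOfQuotients

theorem card_units_mul_card_eq_card_mul_card_units {A B : Type*} [Ring A] [Ring B] (f : A →+* B)
    [IsLocalHom f] (hf : Function.Surjective f) :
    Nat.card Aˣ * Nat.card B = Nat.card A * Nat.card Bˣ := by
  have hfu : Function.Surjective (Units.map (f : A →* B)) :=
    IsLocalRing.surjective_units_map_of_local_ringHom f hf inferInstance
  have hadd : Nat.card (f : A →+ B).ker * Nat.card B = Nat.card A := by
    rw [← AddSubgroup.card_mul_index (f : A →+ B).ker, AddSubgroup.index_ker,
      AddMonoidHom.range_eq_top.mpr hf, AddSubgroup.card_top]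
  have hmul : Nat.card (Units.map (f : A →* B)).ker * Nat.card Bˣ = Nat.card Aˣ := by
    rw [← Subgroup.card_mul_index (Units.map (f : A →* B)).ker, Subgroup.index_ker,
      MonoidHom.range_eq_top.mpr hfu, Subgroup.card_top]
  let subOne : (Units.map (f : A →* B)).ker → (f : A →+ B).ker := fun u =>
    ⟨u.1 - 1, by simpa [sub_eq_zero] using congrArg Units.val (MonoidHom.mem_ker.mp u.2)⟩
  have hsubOne : Function.Bijective subOne := by
    refine ⟨fun u v huv => ?_, fun x => ?_⟩
    · exact Subtype.ext (Units.ext (sub_left_injective (congrArg Subtype.val huv)))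
    · have hx : f x = 0 := x.2
      obtain ⟨u, hu⟩ : IsUnit (1 + x : A) := isUnit_of_map_unit f _ (by simp [hx])
      exact ⟨⟨u, Units.ext (by simp [hu, hx])⟩, Subtype.ext (by simp [subOne, hu])⟩
  rw [← hadd, ← hmul, Nat.card_eq_of_bijective subOne hsubOne]
  ring

variable {R : Type*} [CommRing R]

theorem card_units_quotient_mul_prod_card_quotient {J : Ideal R} {S : Finset (Ideal R)}
    (hS : ∀ P, P ∈ S ↔ P.IsMaximal ∧ J ≤ P) :
    Nat.card (R ⧸ J)ˣ * ∏ P ∈ S, Nat.card (R ⧸ P) =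
      Nat.card (R ⧸ J) * ∏ P ∈ S, Nat.card (R ⧸ P)ˣ := by
  let f : R ⧸ J →+* Π P : S, R ⧸ P.1 :=
    RingHom.pi fun P => Ideal.Quotient.factor ((hS P).mp P.2).2
  have hf : Function.Surjective f := fun y => by
    have hcoprime : Pairwise fun P Q : S => IsCoprime P.1 Q.1 := fun P Q hPQ =>
      have := ((hS P).mp P.2).1
      have := ((hS Q).mp Q.2).1
      Ideal.isCoprime_of_isMaximal (Subtype.coe_injective.ne hPQ)
    obtain ⟨r, hr⟩ := Ideal.pi_quotient_surjective hcoprime y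
    exact ⟨Ideal.Quotient.mk J r, funext hr⟩
  have : IsLocalHom f := ⟨fun x hx => by
    obtain ⟨r, rfl⟩ := Ideal.Quotient.mk_surjective x
    by_contra hr
    obtain ⟨m, hm, hrm⟩ := exists_max_ideal_of_mem_nonunits hr
    let P := m.comap (Ideal.Quotient.mk J)
    have hPS : P ∈ S := (hS P).mpr
      ⟨Ideal.comap_isMaximal_of_surjective _ Ideal.Quotient.mk_surjective,
        Ideal.mk_ker.symm.trans_le (Ideal.ker_le_comap _)⟩
    have := ((hS P).mp hPS).1.ne_top
    have := Ideal.Quotient.nontrivial_iff.mpr this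
    exact (Pi.isUnit_iff.mp hx ⟨P, hPS⟩).ne_zero (Ideal.Quotient.eq_zero_iff_mem.mpr hrm)⟩
  rw [← Finset.prod_coe_sort S, ← Finset.prod_coe_sort S fun P => Nat.card (R ⧸ P)ˣ, ← Nat.card_pi,
    ← Nat.card_pi, card_units_mul_card_eq_card_mul_card_units f hf,
    Nat.card_congr MulEquiv.piUnits.toEquiv]

open UniqueFactorizationMonoid

variable [IsDedekindDomain R]

theorem card_units_quotient_mul_prod_primeFactors {J : Ideal R} (hJ : J ≠ ⊥) :
    Nat.card (R ⧸ J)ˣ * ∏ P ∈ primeFactors J, Nat.card (R ⧸ P) =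
      Nat.card (R ⧸ J) * ∏ P ∈ primeFactors J, Nat.card (R ⧸ P)ˣ := by
  refine card_units_quotient_mul_prod_card_quotient fun P => ?_
  rw [mem_primeFactors, Ideal.mem_normalizedFactors_iff hJ]
  exact ⟨fun ⟨hP, hJP⟩ => ⟨hP.isMaximal (ne_bot_of_le_ne_bot hJ hJP), hJP⟩,
    fun ⟨hP, hJP⟩ => ⟨hP.isPrime, hJP⟩⟩

theorem card_quotient_eq_prod_normalizedFactors {I : Ideal R} (hI : I ≠ ⊥) :
    Nat.card (R ⧸ I) = ((normalizedFactors I).map fun P => Nat.card (R ⧸ P)).prod := by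
  classical
  rw [Nat.card_congr (IsDedekindDomain.quotientEquivPiFactors hI).toEquiv, Nat.card_pi,
    ← factors_eq_normalizedFactors, Finset.prod_multiset_map_count,
    ← Finset.prod_coe_sort _ fun P => Nat.card (R ⧸ P) ^ (factors I).count P]
  refine Finset.prod_congr rfl fun P _ => ?_
  have hP : Prime P.1 := prime_of_factor _ (Multiset.mem_toFinset.mp P.2)
  have := Ideal.isPrime_of_prime hP
  exact cardQuot_pow_of_prime hP.ne_zero

theorem card_quotient_mul {I J : Ideal R} (hI : I ≠ ⊥) (hJ : J ≠ ⊥) :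
    Nat.card (R ⧸ I * J) = Nat.card (R ⧸ I) * Nat.card (R ⧸ J) := by
  rw [card_quotient_eq_prod_normalizedFactors (mul_ne_zero hI hJ), normalizedFactors_mul hI hJ,
    Multiset.map_add, Multiset.prod_add, ← card_quotient_eq_prod_normalizedFactors hI,
    ← card_quotient_eq_prod_normalizedFactors hJ]

end UnitsOfQuotients

section EulerProduct

open UniqueFactorizationMonoid

variable {M A : Type*} [CommMonoidWithZero M] [UniqueFactorizationMonoid M]

theorem mul_prod_coe_prime_ne_zero {a : M} (ha : a ≠ 0) (S : Finset {p : M // Prime p}) :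
    a * ∏ p ∈ S, (p : M) ≠ 0 :=
  have := nontrivial_of_ne a 0 ha
  mul_ne_zero ha (Finset.prod_ne_zero_iff.mpr fun p _ => p.2.ne_zero)

theorem map_mul_prod_coe_prime [CommMonoid A] {g : M → A}
    (hmul : ∀ a b, a ≠ 0 → b ≠ 0 → g (a * b) = g a * g b) {a : M} (ha : a ≠ 0)
    (S : Finset {p : M // Prime p}) :
    g (a * ∏ p ∈ S, (p : M)) = g a * ∏ p ∈ S, g p := by
  induction S using Finset.cons_induction with
  | empty => simp
  | cons p S hp ih =>
    rw [Finset.prod_cons, Finset.prod_cons, mul_left_comm,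
      hmul _ _ p.2.ne_zero (mul_prod_coe_prime_ne_zero ha S), ih, mul_left_comm]

variable [Subsingleton Mˣ]

open scoped Classical in
/-- The prime factors of `b` as a finset in the subtype of primes, which indexes Euler products. -/
noncomputable def primeDivisors (b : M) : Finset {p : M // Prime p} :=
  (primeFactors b).subtype Prime

theorem mem_primeDivisors {b : M} (hb : b ≠ 0) {p : {p : M // Prime p}} :
    p ∈ primeDivisors b ↔ (p : M) ∣ b := by
  classical
  rw [primeDivisors, Finset.mem_subtype, mem_primeFactors, mem_normalizedFactors_iff hb,
    and_iff_right p.2]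

theorem prod_primeDivisors [CommMonoid A] (b : M) (f : M → A) :
    ∏ p ∈ primeDivisors b, f p = ∏ p ∈ primeFactors b, f p := by
  classical
  exact Finset.prod_subtype_of_mem f fun p hp =>
    prime_of_normalized_factor p (mem_primeFactors.mp hp)

theorem prod_coe_prime_dvd_iff_subset_primeDivisors {b : M} (hb : b ≠ 0)
    {S : Finset {p : M // Prime p}} : ∏ p ∈ S, (p : M) ∣ b ↔ S ⊆ primeDivisors b := by
  refine ⟨fun h p hp => (mem_primeDivisors hb).mpr ((Finset.dvd_prod_of_mem _ hp).trans h),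
    fun h => ?_⟩
  have hdvd : ∏ p ∈ S.map (.subtype Prime), p ∣ b := Finset.prod_primes_dvd b
    (Finset.forall_mem_map.mpr fun p _ => p.2)
    (Finset.forall_mem_map.mpr fun p hp => (mem_primeDivisors hb).mp (h hp))
  rwa [Finset.prod_map] at hdvd

/-- Multiplication by a product of distinct primes, recording which primes were used: a nonzero `b`
arises once from each set of primes dividing it. -/
noncomputable def mulPrimesEquiv : {a : M // a ≠ 0} × Finset {p : M // Prime p} ≃
    Σ b : {b : M // b ≠ 0}, (primeDivisors b.1).powerset :=
  .ofBijective
    (fun x =>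
      have hne := mul_prod_coe_prime_ne_zero x.1.2 x.2
      ⟨⟨x.1 * ∏ p ∈ x.2, (p : M), hne⟩, x.2, Finset.mem_powerset.mpr <|
        (prod_coe_prime_dvd_iff_subset_primeDivisors hne).mp (dvd_mul_left _ _)⟩) <| by
    refine ⟨fun ⟨a, S⟩ ⟨a', S'⟩ h => ?_, fun ⟨⟨b, hb⟩, S, hS⟩ => ?_⟩
    · have hb := congrArg (fun y => (y.1 : M)) h
      obtain rfl : S = S' := congrArg (fun y => y.2.1) h
      have hS := right_ne_zero_of_mul (mul_prod_coe_prime_ne_zero a.2 S)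
      exact Prod.ext (Subtype.ext (mul_right_cancel₀ hS hb)) rfl
    · obtain ⟨a, rfl⟩ := exists_eq_mul_left_of_dvd <|
        (prod_coe_prime_dvd_iff_subset_primeDivisors hb).mpr (Finset.mem_powerset.mp hS)
      exact ⟨⟨⟨a, left_ne_zero_of_mul hb⟩, S⟩, rfl⟩

theorem coe_fst_mulPrimesEquiv (x : {a : M // a ≠ 0} × Finset {p : M // Prime p}) :
    ((mulPrimesEquiv x).1 : M) = x.1 * ∏ p ∈ x.2, (p : M) := rfl

theorem coe_snd_mulPrimesEquiv (x : {a : M // a ≠ 0} × Finset {p : M // Prime p}) :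
    ((mulPrimesEquiv x).2 : Finset {p : M // Prime p}) = x.2 := rfl

theorem hasSum_mul_prod_primeFactors [NormedCommRing A] [NormOneClass A]
    [CompleteSpace A] {g h : M → A}
    (hmul : ∀ a b, a ≠ 0 → b ≠ 0 → g (a * b) = g a * g b)
    (hg : Summable fun a : {a : M // a ≠ 0} => ‖g a‖)
    (hgh : Summable fun p : {p : M // Prime p} => ‖g p * h p‖) :
    HasSum (fun b : {b : M // b ≠ 0} => g b * ∏ p ∈ primeFactors b.1, (1 + h p))
      ((∑' a : {a : M // a ≠ 0}, g a) * ∏' p : {p : M // Prime p}, (1 + g p * h p)) := by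
  have hprod : Summable fun S : Finset {p : M // Prime p} => ‖∏ p ∈ S, g p * h p‖ :=
    (summable_finsetProd_of_summable_nonneg (fun _ => norm_nonneg _) hgh).of_nonneg_of_le
      (fun _ => norm_nonneg _) fun S => S.norm_prod_le _
  have hpairs := (summable_mul_of_summable_norm hg hprod).hasSum
  rw [← tsum_mul_tsum_of_summable_norm hg hprod, ← tprod_one_add hprod.of_norm] at hpairs
  let F (y : Σ b : {b : M // b ≠ 0}, (primeDivisors b.1).powerset) : A := g y.1 * ∏ p ∈ y.2.1, h p
  have hF : F ∘ mulPrimesEquiv = fun x : {a : M // a ≠ 0} × Finset {p : M // Prime p} =>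
      g x.1 * ∏ p ∈ x.2, g p * h p := funext fun x => by
    simp only [F, Function.comp_apply, coe_fst_mulPrimesEquiv, coe_snd_mulPrimesEquiv,
      map_mul_prod_coe_prime hmul x.1.2, mul_assoc, Finset.prod_mul_distrib]
  rw [← hF, mulPrimesEquiv.hasSum_iff] at hpairs
  refine hpairs.sigma fun b => ?_
  rw [← prod_primeDivisors b.1 fun p => 1 + h p, Finset.prod_one_add, Finset.mul_sum,
    ← Finset.sum_coe_sort]
  exact hasSum_fintype _

end EulerProduct

section TotientZeta

open UniqueFactorizationMonoid

theorem natCast_prod_cpow {ι : Type*} (S : Finset ι) (f : ι → ℕ) (s : ℂ) :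
    ((∏ i ∈ S, f i : ℕ) : ℂ) ^ s = ∏ i ∈ S, (f i : ℂ) ^ s := by
  induction S using Finset.cons_induction with
  | empty => simp
  | cons i S hi ih =>
    rw [Finset.prod_cons, Finset.prod_cons, Nat.cast_mul, Complex.natCast_mul_natCast_cpow, ih]

theorem norm_natCast_cpow_le_two_rpow_mul {m n : ℕ} (hm : 0 < m) (hmn : m ≤ n) (hnm : n ≤ 2 * m)
    (s : ℂ) : ‖(m : ℂ) ^ s‖ ≤ 2 ^ |s.re| * ‖(n : ℂ) ^ s‖ := by
  have hm' : (0 : ℝ) < m := mod_cast hm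
  have hn' : (0 : ℝ) < n := mod_cast hm.trans_le hmn
  have hmn' : (m : ℝ) ≤ n := mod_cast hmn
  have hnm' : (n : ℝ) ≤ 2 * m := mod_cast hnm
  rw [Complex.norm_natCast_cpow_of_pos hm, Complex.norm_natCast_cpow_of_pos (hm.trans_le hmn),
    ← div_le_iff₀ (Real.rpow_pos_of_pos hn' _), ← Real.div_rpow hm'.le hn'.le]
  calc ((m : ℝ) / n) ^ s.re
    _ ≤ (m / n : ℝ) ^ (-|s.re|) :=
      Real.rpow_le_rpow_of_exponent_ge (div_pos hm' hn') (div_le_one_of_le₀ hmn' hn'.le)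
        (neg_abs_le _)
    _ ≤ (2⁻¹ : ℝ) ^ (-|s.re|) := by
      refine Real.rpow_le_rpow_of_nonpos (by norm_num) ?_ (neg_nonpos.mpr (abs_nonneg _))
      rw [le_div_iff₀ hn']
      linarith
    _ = 2 ^ |s.re| := by rw [Real.rpow_neg_eq_inv_rpow, inv_inv]

variable {R : Type*} [CommRing R] [Ring.HasFiniteQuotients R]

theorem card_quotient_cpow_ne_zero {I : Ideal R} (hI : I ≠ ⊥) (s : ℂ) :
    (Nat.card (R ⧸ I) : ℂ) ^ s ≠ 0 := by
  have := Ring.HasFiniteQuotients.finiteQuotient hI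
  exact Complex.cpow_ne_zero_iff.mpr (.inl (Nat.cast_ne_zero.mpr Nat.card_pos.ne'))

variable [IsDedekindDomain R]

theorem card_quotient_eq_card_units_add_one {P : Ideal R} (hP : Prime P) :
    Nat.card (R ⧸ P) = Nat.card (R ⧸ P)ˣ + 1 := by
  have := Ring.HasFiniteQuotients.finiteQuotient hP.ne_zero
  have := (Ideal.isPrime_of_prime hP).isMaximal hP.ne_zero
  let := Ideal.Quotient.field P
  exact Nat.card_eq_card_units_add_one (R ⧸ P)

theorem card_units_quotient_cpow {J : Ideal R} (hJ : J ≠ ⊥) (s : ℂ) :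
    (Nat.card (R ⧸ J)ˣ : ℂ) ^ s = (Nat.card (R ⧸ J) : ℂ) ^ s * ∏ P ∈ primeFactors J,
      (Nat.card (R ⧸ P)ˣ : ℂ) ^ s / (Nat.card (R ⧸ P) : ℂ) ^ s := by
  have hne : ∏ P ∈ primeFactors J, (Nat.card (R ⧸ P) : ℂ) ^ s ≠ 0 :=
    Finset.prod_ne_zero_iff.mpr fun P hP => card_quotient_cpow_ne_zero
      (prime_of_normalized_factor P (mem_primeFactors.mp hP)).ne_zero s
  rw [Finset.prod_div_distrib, ← mul_div_assoc, eq_div_iff hne, ← natCast_prod_cpow,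
    ← natCast_prod_cpow, ← Complex.natCast_mul_natCast_cpow, ← Complex.natCast_mul_natCast_cpow,
    ← Nat.cast_mul, ← Nat.cast_mul, card_units_quotient_mul_prod_primeFactors hJ]

theorem summable_norm_card_units_cpow_sub_card_cpow {s : ℂ}
    (hs : Summable fun I : {I : Ideal R // I ≠ ⊥} => (Nat.card (R ⧸ I.1) : ℂ) ^ s) :
    Summable fun P : {P : Ideal R // Prime P} =>
      ‖(Nat.card (R ⧸ P.1)ˣ : ℂ) ^ s - (Nat.card (R ⧸ P.1) : ℂ) ^ s‖ := by
  let toIdeal (P : {P : Ideal R // Prime P}) : {I : Ideal R // I ≠ ⊥} := ⟨P.1, P.2.ne_zero⟩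
  have htoIdeal : toIdeal.Injective := fun P Q hPQ => Subtype.ext (congrArg (fun I => I.1) hPQ :)
  have hprime : Summable fun P : {P : Ideal R // Prime P} => ‖(Nat.card (R ⧸ P.1) : ℂ) ^ s‖ :=
    (hs.norm.comp_injective htoIdeal :)
  refine (hprime.mul_left (2 ^ |s.re| + 1)).of_nonneg_of_le (fun _ => norm_nonneg _) fun P => ?_
  have hcard := card_quotient_eq_card_units_add_one P.2
  have := Ring.HasFiniteQuotients.finiteQuotient P.2.ne_zero
  have hunits : 0 < Nat.card (R ⧸ P.1)ˣ := Nat.card_pos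
  rw [add_one_mul]
  exact norm_sub_le_of_le (norm_natCast_cpow_le_two_rpow_mul hunits (by lia) (by lia) s) le_rfl

theorem hasSum_card_units_quotient_cpow {s : ℂ}
    (hs : Summable fun I : {I : Ideal R // I ≠ ⊥} => (Nat.card (R ⧸ I.1) : ℂ) ^ s) :
    HasSum (fun I : {I : Ideal R // I ≠ ⊥} => (Nat.card (R ⧸ I.1)ˣ : ℂ) ^ s)
      ((∑' I : {I : Ideal R // I ≠ ⊥}, (Nat.card (R ⧸ I.1) : ℂ) ^ s) *
        ∏' P : {P : Ideal R // Prime P},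
          (1 + ((Nat.card (R ⧸ P.1)ˣ : ℂ) ^ s - (Nat.card (R ⧸ P.1) : ℂ) ^ s))) := by
  let N (I : Ideal R) : ℂ := (Nat.card (R ⧸ I) : ℂ) ^ s
  let u (P : Ideal R) : ℂ := (Nat.card (R ⧸ P)ˣ : ℂ) ^ s / N P
  have hN (I J : Ideal R) (hI : I ≠ 0) (hJ : J ≠ 0) : N (I * J) = N I * N J := by
    simp only [N, card_quotient_mul hI hJ, Nat.cast_mul, Complex.natCast_mul_natCast_cpow]
  have hu (P : {P : Ideal R // Prime P}) :
      N P * (u P - 1) = (Nat.card (R ⧸ P.1)ˣ : ℂ) ^ s - N P := by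
    rw [mul_sub_one, mul_div_cancel₀ _ (card_quotient_cpow_ne_zero P.2.ne_zero s)]
  have key := hasSum_mul_prod_primeFactors (h := fun P => u P - 1) hN hs.norm
    ((summable_norm_card_units_cpow_sub_card_cpow hs).congr fun P => by rw [hu])
  simp only [hu, add_sub_cancel] at key
  exact key.congr_fun fun J => card_units_quotient_cpow J.2 s

theorem numberField_totient_zeta_eq_zeta_mul_euler_product_general (s : ℂ)
    (hs : Summable fun I : {I : Ideal R // I ≠ ⊥} => (Nat.card (R ⧸ I.1) : ℂ) ^ (-s)) :
    Summable (fun I : {I : Ideal R // I ≠ ⊥} => (Nat.card (R ⧸ I.1)ˣ : ℂ) ^ (-s)) ∧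
    Multipliable (fun P : {P : Ideal R // P.IsPrime ∧ P ≠ ⊥} =>
      1 + ((Nat.card (R ⧸ P.1) : ℂ) - 1) ^ (-s) - (Nat.card (R ⧸ P.1) : ℂ) ^ (-s)) ∧
    (∑' I : {I : Ideal R // I ≠ ⊥}, (Nat.card (R ⧸ I.1)ˣ : ℂ) ^ (-s)) =
      (∑' I : {I : Ideal R // I ≠ ⊥}, (Nat.card (R ⧸ I.1) : ℂ) ^ (-s)) *
      ∏' P : {P : Ideal R // P.IsPrime ∧ P ≠ ⊥},
        (1 + ((Nat.card (R ⧸ P.1) : ℂ) - 1) ^ (-s) - (Nat.card (R ⧸ P.1) : ℂ) ^ (-s)) := by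
  let e : {P : Ideal R // Prime P} ≃ {P : Ideal R // P.IsPrime ∧ P ≠ ⊥} :=
    .subtypeEquivRight fun P =>
      ⟨fun hP => ⟨Ideal.isPrime_of_prime hP, hP.ne_zero⟩,
        fun ⟨hP, hbot⟩ => Ideal.prime_of_isPrime hbot hP⟩
  have hfactor (P : {P : Ideal R // Prime P}) :
      1 + ((Nat.card (R ⧸ (e P).1) : ℂ) - 1) ^ (-s) - (Nat.card (R ⧸ (e P).1) : ℂ) ^ (-s) =
        1 + ((Nat.card (R ⧸ P.1)ˣ : ℂ) ^ (-s) - (Nat.card (R ⧸ P.1) : ℂ) ^ (-s)) := by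
    rw [add_sub_assoc]
    simp [e, card_quotient_eq_card_units_add_one P.2]
  have hsum := hasSum_card_units_quotient_cpow hs
  refine ⟨hsum.summable, ?_, ?_⟩
  · rw [← e.multipliable_iff]
    exact (multipliable_one_add_of_summable
      (summable_norm_card_units_cpow_sub_card_cpow hs)).congr fun P => (hfactor P).symm
  · rw [hsum.tsum_eq, ← e.tprod_eq, tprod_congr hfactor]

end TotientZeta

section IdealCounting

open Filter in
theorem summable_natCast_rpow_neg_of_card_isBigO {α : Type*} (f : α → ℕ) [Northcott f] {r σ : ℝ}
    (hr : 0 ≤ r) (hσ : r < σ)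
    (hO : (fun n : ℕ => (Nat.card {a // f a ≤ n} : ℝ)) =O[atTop] fun n => (n : ℝ) ^ r) :
    Summable fun a => (f a : ℝ) ^ (-σ) := by
  have hfin (n : ℕ) : {a | f a = n}.Finite := (Northcott.finite_le n).subset fun _ => le_of_eq
  have hle (n : ℕ) : ∑ k ∈ Finset.Icc 1 n, Nat.card {a // f a = k} ≤ Nat.card {a // f a ≤ n} := by
    rw [← Finset.card_preimage_eq_sum_card_image_eq fun k _ => hfin k]
    exact Nat.card_mono (Northcott.finite_le n) fun a ha =>
      (Finset.mem_Icc.mp (Set.mem_preimage.mp ha)).2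
  have hL : LSeriesSummable (fun n => ((Nat.card {a // f a = n} : ℝ) : ℂ)) σ := by
    refine LSeriesSummable_of_sum_norm_bigO_and_nonneg (.trans (.of_norm_le fun n => ?_) hO)
      (fun _ => Nat.cast_nonneg _) hr hσ
    rw [← Nat.cast_sum, Real.norm_natCast]
    exact_mod_cast hle n
  have hterm (n : ℕ) : ‖LSeries.term (fun n => ((Nat.card {a // f a = n} : ℝ) : ℂ)) σ n‖ =
      ∑' a : {a // f a = n}, (f a : ℝ) ^ (-σ) := by
    rw [tsum_congr fun a : {a // f a = n} => by rw [a.2], tsum_const, nsmul_eq_mul,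
      LSeries.norm_term_eq]
    split_ifs with hn
    · rw [hn, Nat.cast_zero, Real.zero_rpow (neg_ne_zero.mpr (hr.trans_lt hσ).ne'), mul_zero]
    · rw [Complex.ofReal_natCast, Complex.norm_natCast, Complex.ofReal_re,
        Real.rpow_neg n.cast_nonneg, div_eq_mul_inv]
  rw [← (Equiv.sigmaFiberEquiv f).summable_iff]
  refine (summable_sigma_of_nonneg fun x => Real.rpow_nonneg (Nat.cast_nonneg _) _).mpr
    ⟨fun n => ?_, hL.norm.congr hterm⟩
  have : Finite {a // f a = n} := hfin n
  exact .of_finite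

theorem summable_card_quotient_rpow_neg (K : Type*) [Field K] [NumberField K] {σ : ℝ} (hσ : 1 < σ) :
    Summable fun I : Ideal (𝓞 K) => (Nat.card (𝓞 K ⧸ I) : ℝ) ^ (-σ) := by
  refine summable_natCast_rpow_neg_of_card_isBigO (Submodule.cardQuot : Ideal (𝓞 K) → ℕ)
    zero_le_one hσ ?_
  refine Asymptotics.isBigO_atTop_natCast_rpow_of_tendsto_div_rpow (a := dedekindZeta_residue K) ?_
  refine ((Ideal.tendsto_norm_le_div_atTop K).comp tendsto_natCast_atTop_atTop).congr fun n => ?_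
  rw [Function.comp_apply, Real.rpow_one]
  simp only [Nat.cast_le, Ideal.absNorm_apply]
  rfl

theorem summable_card_quotient_cpow_neg (K : Type*) [Field K] [NumberField K] {s : ℂ}
    (hs : 1 < s.re) :
    Summable fun I : Ideal (𝓞 K) => (Nat.card (𝓞 K ⧸ I) : ℂ) ^ (-s) := by
  refine .of_norm ((summable_card_quotient_rpow_neg K hs).congr fun I => ?_)
  rw [Complex.norm_natCast_cpow_of_re_ne_zero _ (by rw [Complex.neg_re]; linarith), Complex.neg_re]

end IdealCounting

/-- For a number field `K`, with norm `N(I) = #(𝓞 K / I)` and Euler function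
`φ_K(I) = #(𝓞 K / I)ˣ`, and for every complex `s` with `Re(s) > 1`:
the totient zeta series, the Dedekind zeta series and the Euler product
`∏_P (1 + (N(P)−1)^{−s} − N(P)^{−s})` all converge, and
`∑_I φ_K(I)^{−s} = (∑_I N(I)^{−s}) · ∏_P (1 + (N(P)−1)^{−s} − N(P)^{−s})`. -/
theorem numberField_totient_zeta_eq_zeta_mul_euler_product
    (K : Type*) [Field K] [NumberField K] (s : ℂ) (hs : 1 < s.re) :
    Summable (fun I : {I : Ideal (𝓞 K) // I ≠ ⊥} =>
      (Nat.card ((𝓞 K ⧸ I.1)ˣ) : ℂ) ^ (-s)) ∧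
    Summable (fun I : {I : Ideal (𝓞 K) // I ≠ ⊥} =>
      (Nat.card (𝓞 K ⧸ I.1) : ℂ) ^ (-s)) ∧
    Multipliable (fun P : {P : Ideal (𝓞 K) // P.IsPrime ∧ P ≠ ⊥} =>
      1 + ((Nat.card (𝓞 K ⧸ P.1) : ℂ) - 1) ^ (-s) - (Nat.card (𝓞 K ⧸ P.1) : ℂ) ^ (-s)) ∧
    (∑' I : {I : Ideal (𝓞 K) // I ≠ ⊥}, (Nat.card ((𝓞 K ⧸ I.1)ˣ) : ℂ) ^ (-s)) =
      (∑' I : {I : Ideal (𝓞 K) // I ≠ ⊥}, (Nat.card (𝓞 K ⧸ I.1) : ℂ) ^ (-s)) *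
      (∏' P : {P : Ideal (𝓞 K) // P.IsPrime ∧ P ≠ ⊥},
        (1 + ((Nat.card (𝓞 K ⧸ P.1) : ℂ) - 1) ^ (-s) - (Nat.card (𝓞 K ⧸ P.1) : ℂ) ^ (-s))) := by
  have hN : Summable fun I : {I : Ideal (𝓞 K) // I ≠ ⊥} => (Nat.card (𝓞 K ⧸ I.1) : ℂ) ^ (-s) :=
    (summable_card_quotient_cpow_neg K hs).comp_injective Subtype.val_injective
  obtain ⟨htotient, hproduct, heq⟩ :=
    numberField_totient_zeta_eq_zeta_mul_euler_product_general s hN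
  exact ⟨htotient, hN, hproduct, heq⟩
end

section
/- Let K be a number field with ring of integers O_K, and for a nonzero ideal I of O_K let N(I) = #(O_K/I). Then ∏_P (1 + (N(P)−1)^{−1} − N(P)^{−1}) · ∑_I N(I)^{−6} = (∑_I N(I)^{−2}) · (∑_I N(I)^{−3}), where the product runs over all nonzero prime ideals P of O_K and each sum runs over all nonzero ideals I of O_K (all quantities being convergent positive real numbers); that is, f_K(1) = ζ_K(2)ζ_K(3)/ζ_K(6). -/
open NumberField

/-!
Sieving the elements divisible by a prime `p` out of `∑ f(a)`, for `f` completely multiplicative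
and absolutely summable, multiplies the sum by `1 - f(p)`. Sieving by all primes leaves only
`f(1) = 1`, so `∏ (1 - f(p)) = (∑ f(a))⁻¹`. Apply this to `f = g ^ 2, g ^ 3, g ^ 6`
with `g(I) = N(I)⁻¹`; the local factors combine through
`(1 - x ^ 6) / ((1 - x ^ 2) (1 - x ^ 3)) = 1 + x ^ 2 / (1 - x)`, which for `x = N⁻¹` is
`1 + (N - 1)⁻¹ - N⁻¹`. The series converge because the number of ideals of norm at most `n`
is `O(n)`.
-/

section Sieve

open Filter Topology

variable {M F : Type*} [CommMonoidWithZero M]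

/-- The elements of `M` left after sieving by the primes in `S`, that is, those which no prime
in `S` divides. -/
def sifted (S : Finset {p : M // Prime p}) : Set M :=
  {a | ∀ p ∈ S, ¬ p.1 ∣ a}

@[simp]
lemma sifted_empty : sifted (∅ : Finset {p : M // Prime p}) = Set.univ := by
  simp [sifted]

lemma sifted_insert [DecidableEq {p : M // Prime p}] (q : {p : M // Prime p})
    (S : Finset {p : M // Prime p}) :
    sifted (insert q S) = sifted S \ Set.range (q.1 * ·) := by
  ext a
  have hrange : a ∈ Set.range (q.1 * ·) ↔ q.1 ∣ a := exists_congr fun _ => eq_comm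
  rw [Set.mem_sdiff, hrange, and_comm]
  exact Finset.forall_mem_insert (p := fun p : {p : M // Prime p} => ¬ p.1 ∣ a) ..

lemma one_mem_sifted (S : Finset {p : M // Prime p}) : 1 ∈ sifted S :=
  fun p _ => p.2.not_dvd_one

section Units

variable [IsCancelMulZero M] [Subsingleton Mˣ]

lemma prime_mul_mem_sifted_iff {q : {p : M // Prime p}} {S : Finset {p : M // Prime p}}
    (hq : q ∉ S) {a : M} : q.1 * a ∈ sifted S ↔ a ∈ sifted S := by
  refine forall₂_congr fun p hp => not_congr ⟨fun h => ?_, fun h => h.mul_left _⟩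
  refine (p.2.dvd_or_dvd h).resolve_left fun hpq => hq ?_
  have : p = q := Subtype.ext (associated_iff_eq.mp ((p.2.dvd_prime_iff_associated q.2).mp hpq))
  exact this ▸ hp

variable [NormedField F] [CompleteSpace F] {f : M →*₀ F}

lemma tsum_sifted_insert [DecidableEq {p : M // Prime p}] (hf : Summable (‖f ·‖))
    {q : {p : M // Prime p}} {S : Finset {p : M // Prime p}} (hq : q ∉ S) :
    ∑' a : sifted (insert q S), f a = (1 - f q) * ∑' a : sifted S, f a := by
  have hinj : Function.Injective (q.1 * ·) := mul_right_injective₀ q.2.ne_zero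
  have hindicator (a : M) : (sifted S).indicator f (q.1 * a) = f q * (sifted S).indicator f a := by
    by_cases ha : a ∈ sifted S <;> simp [Set.indicator, prime_mul_mem_sifted_iff hq, ha]
  have hmultiples : ∑' a : Set.range (q.1 * ·), (sifted S).indicator f a =
      f q * ∑' a : sifted S, f a := by
    rw [tsum_range _ hinj, tsum_congr hindicator, tsum_mul_left, tsum_subtype]
  have hsplit := (hf.of_norm.indicator (sifted S)).tsum_subtype_add_tsum_subtype_compl
    (Set.range (q.1 * ·))
  rw [hmultiples, tsum_subtype (Set.range _)ᶜ, Set.indicator_indicator, ← tsum_subtype,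
    ← tsum_subtype (sifted S), Set.inter_comm, ← Set.sdiff_eq, ← sifted_insert] at hsplit
  linear_combination hsplit

lemma tsum_sifted_eq_prod_mul_tsum (hf : Summable (‖f ·‖)) (S : Finset {p : M // Prime p}) :
    ∑' a : sifted S, f a = (∏ p ∈ S, (1 - f p)) * ∑' a, f a := by
  classical
  induction S using Finset.induction with
  | empty => simp [tsum_subtype]
  | insert q S hq ih => rw [tsum_sifted_insert hf hq, ih, Finset.prod_insert hq, mul_assoc]

end Units

variable [UniqueFactorizationMonoid M] [Subsingleton Mˣ]

lemma eventually_notMem_sifted {a : M} (ha₀ : a ≠ 0) (ha₁ : a ≠ 1) :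
    ∀ᶠ S in atTop, a ∉ sifted S := by
  obtain ⟨p, hp, hpa⟩ := WfDvdMonoid.exists_irreducible_factor (mt isUnit_iff_eq_one.mp ha₁) ha₀
  filter_upwards [eventually_ge_atTop {⟨p, hp.prime⟩}] with S hS ha
  exact ha ⟨p, hp.prime⟩ (hS (Finset.mem_singleton_self _)) hpa

variable [NormedField F] [CompleteSpace F] {f : M →*₀ F}

lemma tendsto_tsum_sifted (hf : Summable (‖f ·‖)) :
    Tendsto (fun S : Finset {p : M // Prime p} => ∑' a : sifted S, f a) atTop (𝓝 1) := by
  classical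
  have hpointwise (a : M) :
      Tendsto (fun S => (sifted S).indicator f a) atTop (𝓝 (if a = 1 then f a else 0)) := by
    refine tendsto_const_nhds.congr' ?_
    rcases eq_or_ne a 1 with rfl | ha₁
    · exact .of_forall fun S => by simp [one_mem_sifted]
    rcases eq_or_ne a 0 with rfl | ha₀
    · exact .of_forall fun S => by simp [Set.indicator]
    filter_upwards [eventually_notMem_sifted ha₀ ha₁] with S hS
    simp [hS, ha₁]
  have hlim := tendsto_tsum_of_dominated_convergence hf hpointwise
    (.of_forall fun _ a => norm_indicator_le_norm_self f a)
  simpa only [tsum_subtype, tsum_ite_eq, map_one] using hlim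

end Sieve

section EulerProduct

open Filter Topology

variable {M F : Type*} [CommMonoidWithZero M] [UniqueFactorizationMonoid M]
  [Subsingleton Mˣ] [NormedField F] [CompleteSpace F]

lemma tendsto_prod_one_sub_mul_tsum {f : M →*₀ F} (hf : Summable (‖f ·‖)) :
    Tendsto (fun S : Finset {p : M // Prime p} => (∏ p ∈ S, (1 - f p)) * ∑' a, f a)
      atTop (𝓝 1) :=
  (tendsto_tsum_sifted hf).congr (tsum_sifted_eq_prod_mul_tsum hf)

lemma tsum_ne_zero_of_summable_norm {f : M →*₀ F} (hf : Summable (‖f ·‖)) : ∑' a, f a ≠ 0 := by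
  intro h
  have hlim := tendsto_prod_one_sub_mul_tsum hf
  simp only [h, mul_zero] at hlim
  exact zero_ne_one (tendsto_nhds_unique tendsto_const_nhds hlim)

theorem hasProd_one_sub_inv_tsum {f : M →*₀ F} (hf : Summable (‖f ·‖)) :
    HasProd (fun p : {p : M // Prime p} => 1 - f p) (∑' a, f a)⁻¹ := by
  have hlim := (tendsto_prod_one_sub_mul_tsum hf).mul_const (∑' a, f a)⁻¹
  simpa only [HasProd, SummationFilter.unconditional_filter, one_mul,
    mul_inv_cancel_right₀ (tsum_ne_zero_of_summable_norm hf)] using hlim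

end EulerProduct

section ZetaQuotient

lemma summable_pow_of_le {α : Type*} {u : α → ℝ} (hu₀ : ∀ a, 0 ≤ u a) {j k : ℕ} (hj : j ≠ 0)
    (hjk : j ≤ k) (hu : Summable (u · ^ j)) : Summable (u · ^ k) := by
  refine hu.of_norm_bounded_eventually ?_
  filter_upwards [hu.tendsto_cofinite_zero.eventually_le_const one_pos] with a ha
  rw [Real.norm_of_nonneg (pow_nonneg (hu₀ a) k)]
  exact pow_le_pow_of_le_one (hu₀ a) ((pow_le_one_iff_of_nonneg (hu₀ a) hj).mp ha) hjk

lemma norm_lt_one_of_summable_norm_pow {M F : Type*} [CommMonoidWithZero M] [IsCancelMulZero M]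
    [NormedField F] {g : M →*₀ F} {k : ℕ} (hk : k ≠ 0) (hg : Summable (‖g ·‖ ^ k))
    {p : M} (hp₀ : p ≠ 0) (hp : ¬ IsUnit p) : ‖g p‖ < 1 := by
  have hgeom := hg.comp_injective (pow_injective_of_not_isUnit hp hp₀)
  have : ‖(‖g p‖ ^ k)‖ < 1 := summable_geometric_iff_norm_lt_one.mp <| hgeom.congr fun n => by
    simp only [Function.comp_apply, map_pow, norm_pow, ← pow_mul, mul_comm]
  rwa [norm_pow, norm_norm, pow_lt_one_iff_of_nonneg (norm_nonneg _) hk] at this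

lemma one_add_sq_div_one_sub {F : Type*} [Field F] {x : F} (hx₂ : x ^ 2 ≠ 1) (hx₃ : x ^ 3 ≠ 1) :
    1 + x ^ 2 / (1 - x) = (1 - x ^ 6) / ((1 - x ^ 2) * (1 - x ^ 3)) := by
  have hx : 1 - x ≠ 0 := fun h => hx₂ (by rw [← sub_eq_zero.mp h, one_pow])
  have hx₂' : 1 - x ^ 2 ≠ 0 := sub_ne_zero.mpr hx₂.symm
  have hx₃' : 1 - x ^ 3 ≠ 0 := sub_ne_zero.mpr hx₃.symm
  field_simp
  ring

variable {M F : Type*} [CommMonoidWithZero M] [UniqueFactorizationMonoid M] [Subsingleton Mˣ]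
  [NormedField F] [CompleteSpace F] {g : M →*₀ F}

lemma tsum_pow_ne_zero {k : ℕ} (hk : k ≠ 0) (hg : Summable (‖g · ^ k‖)) : ∑' a, g a ^ k ≠ 0 :=
  tsum_ne_zero_of_summable_norm (f := (powMonoidWithZeroHom hk).comp g) hg

lemma hasProd_one_sub_pow {k : ℕ} (hk : k ≠ 0) (hg : Summable (‖g · ^ k‖)) :
    HasProd (fun p : {p : M // Prime p} => 1 - g p ^ k) (∑' a, g a ^ k)⁻¹ :=
  hasProd_one_sub_inv_tsum (f := (powMonoidWithZeroHom hk).comp g) hg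

theorem hasProd_one_add_sq_div_one_sub (hg : Summable (‖g ·‖ ^ 2)) :
    HasProd (fun p : {p : M // Prime p} => 1 + g p ^ 2 / (1 - g p))
      ((∑' a, g a ^ 2) * (∑' a, g a ^ 3) / ∑' a, g a ^ 6) := by
  have hpow {k : ℕ} (hk : 2 ≤ k) : Summable (‖g · ^ k‖) := by
    simpa only [norm_pow] using summable_pow_of_le (fun _ => norm_nonneg _) two_ne_zero hk hg
  have h₂ := hasProd_one_sub_pow two_ne_zero (hpow le_rfl)
  have h₃ := hasProd_one_sub_pow three_ne_zero (hpow (by lia))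
  have h₆ := hasProd_one_sub_pow (k := 6) (by lia) (hpow (by lia))
  have hne : (∑' a, g a ^ 2)⁻¹ * (∑' a, g a ^ 3)⁻¹ ≠ 0 :=
    mul_ne_zero (inv_ne_zero (tsum_pow_ne_zero two_ne_zero (hpow le_rfl)))
      (inv_ne_zero (tsum_pow_ne_zero three_ne_zero (hpow (by lia))))
  have hlocal (p : {p : M // Prime p}) {k : ℕ} (hk : k ≠ 0) : g p ^ k ≠ 1 := by
    have hp := norm_lt_one_of_summable_norm_pow two_ne_zero hg p.2.ne_zero p.2.not_isUnit
    intro h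
    have := pow_lt_one₀ (norm_nonneg _) hp hk
    simp [← norm_pow, h] at this
  have hdiv := h₆.div₀ (h₂.mul h₃) hne
  rw [← mul_inv, div_inv_eq_mul, mul_comm, ← div_eq_mul_inv] at hdiv
  exact hdiv.congr_fun fun p =>
    one_add_sq_div_one_sub (hlocal p two_ne_zero) (hlocal p three_ne_zero)

end ZetaQuotient

section Counting

open Filter Asymptotics

lemma sum_card_fiber_le_card_le {α : Type*} {ν : α → ℕ} (hν : ∀ n, {a | ν a = n}.Finite) (n : ℕ) :
    ∑ k ∈ Finset.Icc 1 n, Nat.card {a // ν a = k} ≤ Nat.card {a // ν a ≤ n} := by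
  have hfin : {a | ν a ≤ n}.Finite :=
    (Set.finite_Iic n).preimage' fun k _ => hν k
  rw [← Finset.card_preimage_eq_sum_card_image_eq fun k _ => hν k]
  refine Nat.card_mono (t := {a | ν a ≤ n}) hfin fun a ha => ?_
  exact (Finset.mem_Icc.mp (Finset.mem_coe.mp (Set.mem_preimage.mp ha))).2

theorem summable_rpow_neg_of_card_le_isBigO {α : Type*} {ν : α → ℕ}
    (hν : ∀ n, {a | ν a = n}.Finite) {r s : ℝ}
    (hO : (fun n : ℕ => (Nat.card {a // ν a ≤ n} : ℝ)) =O[atTop] fun n : ℕ => (n : ℝ) ^ r)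
    (hr : 0 ≤ r) (hrs : r < s) : Summable fun a => (ν a : ℝ) ^ (-s) := by
  have hsum : (fun n : ℕ => ∑ k ∈ Finset.Icc 1 n, (Nat.card {a // ν a = k} : ℝ)) =O[atTop]
      fun n : ℕ => (n : ℝ) ^ r := by
    refine (isBigO_of_le _ fun n => ?_).trans hO
    rw [← Nat.cast_sum, Real.norm_natCast, Real.norm_natCast]
    exact_mod_cast sum_card_fiber_le_card_le hν n
  have hL : LSeriesSummable (fun n => ((Nat.card {a // ν a = n} : ℝ) : ℂ)) s :=
    LSeriesSummable_of_sum_norm_bigO_and_nonneg hsum (fun _ => Nat.cast_nonneg _) hr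
      (by simpa using hrs)
  have hs : -s ≠ 0 := by linarith
  rw [← (Equiv.sigmaFiberEquiv ν).summable_iff]
  refine (summable_sigma_of_nonneg fun _ => Real.rpow_nonneg (Nat.cast_nonneg _) _).mpr
    ⟨fun n => ?_, hL.norm.congr fun n => ?_⟩
  · have : Finite {a // ν a = n} := (hν n).to_subtype
    exact .of_finite
  · have hfiber (a : {a // ν a = n}) :
        (ν (Equiv.sigmaFiberEquiv ν ⟨n, a⟩) : ℝ) ^ (-s) = (n : ℝ) ^ (-s) := by
      rw [Equiv.sigmaFiberEquiv_apply, a.2]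
    simp only [hfiber, tsum_const, nsmul_eq_mul, LSeries.norm_term_eq]
    rcases eq_or_ne n 0 with rfl | hn
    · simp [Real.zero_rpow hs]
    · simp [hn, Real.rpow_neg, div_eq_mul_inv]

end Counting

section NumberField

open Filter Asymptotics

lemma card_absNorm_le_isBigO (K : Type*) [Field K] [NumberField K] :
    (fun n : ℕ => (Nat.card {I : Ideal (𝓞 K) // Ideal.absNorm I ≤ n} : ℝ)) =O[atTop]
      fun n : ℕ => (n : ℝ) := by
  refine isBigO_of_div_tendsto_nhds ?_ _ (((Ideal.tendsto_norm_le_div_atTop K).comp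
    tendsto_natCast_atTop_atTop).congr fun n => by simp)
  filter_upwards [eventually_ne_atTop 0] with n hn h
  exact absurd (Nat.cast_eq_zero.mp h) hn

theorem summable_absNorm_rpow_neg (K : Type*) [Field K] [NumberField K] {s : ℝ} (hs : 1 < s) :
    Summable fun I : Ideal (𝓞 K) => (Ideal.absNorm I : ℝ) ^ (-s) :=
  summable_rpow_neg_of_card_le_isBigO Ideal.finite_setOfPred_absNorm_eq
    (by simpa only [Real.rpow_one] using card_absNorm_le_isBigO K) zero_le_one hs

/-- The completely multiplicative function `I ↦ N(I)⁻¹` on ideals, whose `k`-th power has sum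
`ζ_K(k)` when `R = 𝓞 K`. It is defined on all ideals; `⊥`, of norm `0`, contributes `0⁻¹ = 0`. -/
noncomputable def absNormInv (R : Type*) [CommRing R] [IsDedekindDomain R] [Module.Free ℤ R] :
    Ideal R →*₀ ℝ :=
  invMonoidWithZeroHom.comp ((Nat.castRingHom ℝ).toMonoidWithZeroHom.comp Ideal.absNorm)

lemma absNormInv_apply {R : Type*} [CommRing R] [IsDedekindDomain R] [Module.Free ℤ R]
    (I : Ideal R) : absNormInv R I = (Nat.card (R ⧸ I) : ℝ)⁻¹ :=
  rfl

lemma summable_absNormInv_pow (K : Type*) [Field K] [NumberField K] {k : ℕ} (hk : 1 < k) :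
    Summable fun I : Ideal (𝓞 K) => absNormInv (𝓞 K) I ^ k := by
  refine (summable_absNorm_rpow_neg K (s := k) (by exact_mod_cast hk)).congr fun I => ?_
  rw [absNormInv_apply, Real.rpow_neg (Nat.cast_nonneg _), Real.rpow_natCast, inv_pow,
    Ideal.absNorm_apply, Submodule.cardQuot_apply]

lemma hasSum_inv_card_quotient_pow (K : Type*) [Field K] [NumberField K] {k : ℕ} (hk : 1 < k) :
    HasSum (fun I : {I : Ideal (𝓞 K) // I ≠ ⊥} => ((Nat.card (𝓞 K ⧸ I.1) : ℝ) ^ k)⁻¹)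
      (∑' I, absNormInv (𝓞 K) I ^ k) := by
  have hsupport : Function.support (absNormInv (𝓞 K) · ^ k) ⊆ {I | I ≠ ⊥} := by
    rintro _ hI rfl
    exact hI (pow_eq_zero_iff (by lia) |>.mpr (map_zero (absNormInv (𝓞 K))))
  have hsum := (hasSum_subtype_iff_of_support_subset hsupport).mpr
    (summable_absNormInv_pow K hk).hasSum
  exact hsum.congr_fun fun I => by simp [absNormInv_apply]

lemma one_add_inv_sub_one_sub_inv {F : Type*} [Field F] {x : F} (hx₀ : x ≠ 0) (hx₁ : x ≠ 1) :
    1 + (x - 1)⁻¹ - x⁻¹ = 1 + x⁻¹ ^ 2 / (1 - x⁻¹) := by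
  have : x - 1 ≠ 0 := sub_ne_zero.mpr hx₁
  field_simp
  ring

theorem hasProd_one_add_inv_sub_inv_card_quotient (K : Type*) [Field K] [NumberField K] :
    HasProd (fun P : {P : Ideal (𝓞 K) // P.IsPrime ∧ P ≠ ⊥} =>
      1 + ((Nat.card (𝓞 K ⧸ P.1) : ℝ) - 1)⁻¹ - (Nat.card (𝓞 K ⧸ P.1) : ℝ)⁻¹)
      ((∑' I, absNormInv (𝓞 K) I ^ 2) * (∑' I, absNormInv (𝓞 K) I ^ 3) /
        ∑' I, absNormInv (𝓞 K) I ^ 6) := by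
  have hsq : Summable fun I => ‖absNormInv (𝓞 K) I‖ ^ 2 := by
    simpa only [norm_pow] using (summable_absNormInv_pow K one_lt_two).norm
  let e : {P : Ideal (𝓞 K) // P.IsPrime ∧ P ≠ ⊥} ≃ {P : Ideal (𝓞 K) // Prime P} :=
    Equiv.subtypeEquivRight fun P =>
      ⟨fun h => Ideal.prime_of_isPrime h.2 h.1, fun h => ⟨Ideal.isPrime_of_prime h, h.ne_zero⟩⟩
  refine (e.hasProd_iff.mpr (hasProd_one_add_sq_div_one_sub hsq)).congr_fun fun P => ?_
  have hcard : (1 : ℝ) < Nat.card (𝓞 K ⧸ P.1) :=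
    Nat.one_lt_cast.mpr (HeightOneSpectrum.one_lt_absNorm ⟨P.1, P.2.1, P.2.2⟩)
  exact one_add_inv_sub_one_sub_inv (by positivity) hcard.ne'

end NumberField

/-- For a number field `K` with norm `N(I) = #(𝓞 K / I)`, one has
`f_K(1) · ζ_K(6) = ζ_K(2) · ζ_K(3)`, i.e. `f_K(1) = ζ_K(2)ζ_K(3)/ζ_K(6)`, where
`f_K(1) = ∏_P (1 + (N(P)−1)^{−1} − N(P)^{−1})` over the nonzero prime ideals of `𝓞 K`,
and `ζ_K(σ) = ∑_I N(I)^{−σ}` over the nonzero ideals of `𝓞 K`; all the quantities are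
convergent positive reals. -/
theorem numberField_euler_product_at_one
    (K : Type*) [Field K] [NumberField K] :
    Multipliable (fun P : {P : Ideal (𝓞 K) // P.IsPrime ∧ P ≠ ⊥} =>
      (1 + ((Nat.card (𝓞 K ⧸ P.1) : ℝ) - 1)⁻¹ - (Nat.card (𝓞 K ⧸ P.1) : ℝ)⁻¹)) ∧
    Summable (fun I : {I : Ideal (𝓞 K) // I ≠ ⊥} => ((Nat.card (𝓞 K ⧸ I.1) : ℝ) ^ 2)⁻¹) ∧
    Summable (fun I : {I : Ideal (𝓞 K) // I ≠ ⊥} => ((Nat.card (𝓞 K ⧸ I.1) : ℝ) ^ 3)⁻¹) ∧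
    Summable (fun I : {I : Ideal (𝓞 K) // I ≠ ⊥} => ((Nat.card (𝓞 K ⧸ I.1) : ℝ) ^ 6)⁻¹) ∧
    (∏' P : {P : Ideal (𝓞 K) // P.IsPrime ∧ P ≠ ⊥},
        (1 + ((Nat.card (𝓞 K ⧸ P.1) : ℝ) - 1)⁻¹ - (Nat.card (𝓞 K ⧸ P.1) : ℝ)⁻¹)) *
      (∑' I : {I : Ideal (𝓞 K) // I ≠ ⊥}, ((Nat.card (𝓞 K ⧸ I.1) : ℝ) ^ 6)⁻¹) =
      (∑' I : {I : Ideal (𝓞 K) // I ≠ ⊥}, ((Nat.card (𝓞 K ⧸ I.1) : ℝ) ^ 2)⁻¹) *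
      (∑' I : {I : Ideal (𝓞 K) // I ≠ ⊥}, ((Nat.card (𝓞 K ⧸ I.1) : ℝ) ^ 3)⁻¹) := by
  have h₂ := hasSum_inv_card_quotient_pow K (k := 2) (by lia)
  have h₃ := hasSum_inv_card_quotient_pow K (k := 3) (by lia)
  have h₆ := hasSum_inv_card_quotient_pow K (k := 6) (by lia)
  have hprod := hasProd_one_add_inv_sub_inv_card_quotient K
  have h₆_ne : ∑' I, absNormInv (𝓞 K) I ^ 6 ≠ 0 :=
    tsum_pow_ne_zero (by lia) (summable_absNormInv_pow K (by lia)).norm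
  refine ⟨hprod.multipliable, h₂.summable, h₃.summable, h₆.summable, ?_⟩
  rw [hprod.tprod_eq, h₂.tsum_eq, h₃.tsum_eq, h₆.tsum_eq, div_mul_cancel₀ _ h₆_ne]
end

section
/- Let K be a number field with ring of integers O_K. For a nonzero ideal I let N(I) = #(O_K/I) and φ_K(I) = #(O_K/I)^×, and for a positive integer n let t_K(n) be the (finite) number of nonzero ideals I with φ_K(I) = n. For real σ > 1 write ζ_K(σ) = ∑_I N(I)^{−σ} (sum over nonzero ideals). Suppose ρ is a real number such that (σ−1)·ζ_K(σ) tends to ρ as σ tends to 1 from the right. Then the averages (1/N)·∑_{n=1}^{N} t_K(n) converge as N → ∞ to ρ · ζ_K(2) · ζ_K(3) / ζ_K(6). -/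
/-!
For a finite set `S` of primes let `φ_S(I) = N(I) ∏ (1 - 1/N(p))`, the product running over the
primes `p ∈ S` dividing `I`. Multiplication by a prime `p ∉ S` scales `φ_S` by `N(p)` and
`φ_{S ∪ p}` by `N(p) - 1`, so the counting functions satisfy
`F_{S ∪ p}(x) = F_S(x) + F_S(x / (N(p) - 1)) - F_S(x / N(p))`. As the ideals have density `κ`,
induction on `S` gives `F_S(x) ~ κ x ∏_{p ∈ S} (1 - 1/N(p) + 1/(N(p) - 1))`, and the Euler factor
`1 - 1/q + 1/(q - 1) = (1 - q⁻⁶) / ((1 - q⁻²) (1 - q⁻³))` turns the limit of these constants into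
`κ ζ(2) ζ(3) / ζ(6)`.

Since `φ ≤ φ_S`, the count `G` of `φ` is at least `F_S`. Conversely, `φ_S(I) > e^ε φ(I)` forces
`∑ 1/(N(p) - 1) ≥ ε` over the primes `p ∉ S` dividing `I`, and Markov's inequality gives
`ε G(x) ≤ ε F_S(e^ε x) + ∑_{p ∉ S} G(x / (N(p) - 1)) / (N(p) - 1)`. As `∑ 1/(N(p) - 1)²` converges,
this inequality first bootstraps to `G(x) = O(x)`, and then shows that the error is `o(x)` as `S`
grows and `ε` shrinks. Finally `ρ = κ` because an average of coefficients is also the residue of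
the Dirichlet series.
-/

open NumberField

/-- The number of nonzero ideals `I` of the ring of integers of `K` with
`#(𝓞 K / I)ˣ = n` (the totient multiplicity function of the number field `K`). -/
noncomputable def totientMultiplicity (K : Type*) [Field K] [NumberField K] (n : ℕ) : ℕ :=
  Nat.card {I : Ideal (𝓞 K) // I ≠ ⊥ ∧ Nat.card ((𝓞 K ⧸ I)ˣ) = n}

namespace TotientMeanValue

open Filter Topology IsDedekindDomain

section CountingFunction

variable {ι : Type*} {f : ι → ℕ}

theorem sum_ncard_fiber_eq_ncard_le (hf : ∀ i, f i ≠ 0) (hfin : ∀ n, {i | f i ≤ n}.Finite)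
    (n : ℕ) : ∑ k ∈ Finset.Icc 1 n, {i | f i = k}.ncard = {i | f i ≤ n}.ncard := by
  classical
  have hmaps : ∀ i ∈ (hfin n).toFinset, f i ∈ Finset.Icc 1 n := fun i hi ↦
    Finset.mem_Icc.mpr ⟨Nat.one_le_iff_ne_zero.mpr (hf i), (hfin n).mem_toFinset.mp hi⟩
  rw [Set.ncard_eq_toFinset_card _ (hfin n), Finset.card_eq_sum_card_fiberwise hmaps]
  refine Finset.sum_congr rfl fun k hk ↦ ?_
  rw [← Set.ncard_coe_finset]
  congr 1
  ext i
  have hkn := (Finset.mem_Icc.mp hk).2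
  simp only [Set.mem_ofPred_eq, Finset.coe_filter, Set.Finite.mem_toFinset]
  exact ⟨fun h ↦ ⟨h.trans_le hkn, h⟩, fun h ↦ h.2⟩

theorem hasSum_natCast_rpow_iff_hasSum_ncard_fiber (hfin : ∀ n, {i | f i ≤ n}.Finite) {s a : ℝ} :
    HasSum (fun i ↦ (f i : ℝ) ^ (-s)) a ↔
      HasSum (fun n : ℕ ↦ ({i | f i = n}.ncard : ℝ) * (n : ℝ) ^ (-s)) a := by
  have fiberSum (n : ℕ) : HasSum (fun i : {i // f i = n} ↦ (f i : ℝ) ^ (-s))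
      (({i | f i = n}.ncard : ℝ) * (n : ℝ) ^ (-s)) := by
    have : Finite {i // f i = n} := (hfin n).subset fun i hi ↦ le_of_eq hi
    have : Fintype {i // f i = n} := Fintype.ofFinite _
    have hcongr (i : {i // f i = n}) : (f i : ℝ) ^ (-s) = (n : ℝ) ^ (-s) := by rw [i.2]
    convert! hasSum_fintype (fun i : {i // f i = n} ↦ (f i : ℝ) ^ (-s)) using 1
    simp_rw [hcongr, Finset.sum_const, nsmul_eq_mul, Finset.card_univ, ← Nat.card_eq_fintype_card]
    rfl
  rw [← (Equiv.sigmaFiberEquiv f).hasSum_iff]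
  refine ⟨fun h ↦ h.sigma fiberSum, fun h ↦ ?_⟩
  have hsummable : Summable ((fun i ↦ (f i : ℝ) ^ (-s)) ∘ Equiv.sigmaFiberEquiv f) := by
    rw [summable_sigma_of_nonneg fun _ ↦ by dsimp; positivity]
    exact ⟨fun n ↦ (fiberSum n).summable,
      h.summable.congr fun n ↦ (fiberSum n).tsum_eq.symm⟩
  exact (hsummable.hasSum.sigma fiberSum).unique h ▸ hsummable.hasSum

theorem LSeries_term_natCast_ofReal (c : ℕ → ℕ) (hc : c 0 = 0) (s : ℝ) :
    LSeries.term (fun n ↦ (c n : ℂ)) s = fun n ↦ ((c n * (n : ℝ) ^ (-s) : ℝ) : ℂ) := by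
  ext n
  rcases eq_or_ne n 0 with rfl | hn
  · simp [hc]
  · rw [LSeries.term_of_ne_zero hn, Complex.ofReal_mul, div_eq_mul_inv, ← Complex.cpow_neg,
      Complex.ofReal_cpow (by positivity)]
    simp

variable (hf : ∀ i, f i ≠ 0) (hfin : ∀ n, {i | f i ≤ n}.Finite) {κ : ℝ}
  (hκ : Tendsto (fun n : ℕ ↦ ({i | f i ≤ n}.ncard : ℝ) / n) atTop (𝓝 κ))

include hf hfin hκ

theorem tendsto_sum_ncard_fiber_div :
    Tendsto (fun n : ℕ ↦ (∑ k ∈ Finset.Icc 1 n, ({i | f i = k}.ncard : ℝ)) / n) atTop (𝓝 κ) := by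
  simpa only [← Nat.cast_sum, sum_ncard_fiber_eq_ncard_le hf hfin] using hκ

theorem summable_ncard_fiber_mul_rpow {s : ℝ} (hs : 1 < s) :
    Summable fun n : ℕ ↦ ({i | f i = n}.ncard : ℝ) * (n : ℝ) ^ (-s) := by
  have hbigO : (fun n : ℕ ↦ ∑ k ∈ Finset.Icc 1 n, ({i | f i = k}.ncard : ℝ)) =O[atTop]
      fun n ↦ (n : ℝ) ^ (1 : ℝ) := by
    refine (((tendsto_sum_ncard_fiber_div hf hfin hκ).isBigO_one ℝ).mul
      (Asymptotics.isBigO_refl (fun n : ℕ ↦ (n : ℝ)) atTop)).congr' ?_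
        (Eventually.of_forall fun n ↦ by simp)
    filter_upwards [eventually_gt_atTop 0] with n hn
    field_simp
  have hL : LSeriesSummable (fun n ↦ ({i | f i = n}.ncard : ℂ)) s := by
    simpa using LSeriesSummable_of_sum_norm_bigO_and_nonneg hbigO (fun _ ↦ by positivity)
      zero_le_one (by simpa using hs)
  rwa [LSeriesSummable, LSeries_term_natCast_ofReal (fun n ↦ {i | f i = n}.ncard) (by simp [hf]),
    Complex.summable_ofReal] at hL

theorem summable_natCast_rpow {s : ℝ} (hs : 1 < s) : Summable fun i ↦ (f i : ℝ) ^ (-s) :=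
  ((hasSum_natCast_rpow_iff_hasSum_ncard_fiber hfin).mpr
    (summable_ncard_fiber_mul_rpow hf hfin hκ hs).hasSum).summable

theorem LSeries_ncard_fiber_eq_tsum {s : ℝ} (hs : 1 < s) :
    LSeries (fun n ↦ ({i | f i = n}.ncard : ℂ)) s = ((∑' i, (f i : ℝ) ^ (-s) : ℝ) : ℂ) := by
  rw [LSeries, LSeries_term_natCast_ofReal (fun n ↦ {i | f i = n}.ncard) (by simp [hf]),
    ← Complex.ofReal_tsum, ((hasSum_natCast_rpow_iff_hasSum_ncard_fiber hfin).mpr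
      (summable_ncard_fiber_mul_rpow hf hfin hκ hs).hasSum).tsum_eq]

theorem tendsto_sub_one_mul_tsum_natCast_rpow :
    Tendsto (fun s : ℝ ↦ (s - 1) * ∑' i, (f i : ℝ) ^ (-s)) (𝓝[>] 1) (𝓝 κ) := by
  rw [← tendsto_ofReal_iff]
  refine (LSeries_tendsto_sub_mul_nhds_one_of_tendsto_sum_div_and_nonneg _
    (tendsto_sum_ncard_fiber_div hf hfin hκ) fun _ ↦ by positivity).congr' ?_
  filter_upwards [self_mem_nhdsWithin] with s hs
  push_cast
  rw [LSeries_ncard_fiber_eq_tsum hf hfin hκ hs, Complex.ofReal_tsum]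

end CountingFunction

theorem card_units_of_isUnit_iff_map_ne_zero {A B : Type*} [Ring A] [Ring B] [Finite A]
    (f : A →+* B) (hf : Function.Surjective f) (hunit : ∀ x, IsUnit x ↔ f x ≠ 0) :
    (Nat.card Aˣ : ℝ) = Nat.card A * (1 - (Nat.card B : ℝ)⁻¹) := by
  let k := f.toAddMonoidHom.ker
  have card_ker_mul : Nat.card k * Nat.card B = Nat.card A := by
    rw [← AddSubgroup.card_mul_index k, AddSubgroup.index_ker,
      AddMonoidHom.range_eq_top.mpr hf, Nat.card_congr AddSubgroup.topEquiv.toEquiv]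
  have card_units : Nat.card Aˣ = {x : A | IsUnit x}.ncard := by
    rw [← Set.ncard_univ, ← Set.ncard_image_of_injective _ Units.val_injective, Set.image_univ]
    rfl
  have card_units_add : Nat.card Aˣ + Nat.card k = Nat.card A := by
    rw [card_units, ← Set.ncard_add_ncard_compl {x : A | IsUnit x}]
    congr 1
    refine congrArg Set.ncard (Set.ext fun x ↦ ?_)
    simp [k, hunit, AddMonoidHom.mem_ker]
  have : Finite B := Finite.of_surjective f hf
  have hB : (Nat.card B : ℝ) ≠ 0 := by exact_mod_cast Nat.card_pos.ne'
  rw [← card_ker_mul] at card_units_add ⊢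
  rify at card_units_add ⊢
  field_simp
  linear_combination card_units_add

section NonzeroIdeal

variable {R : Type*} [CommRing R]

/-- The nonzero ideals of `R`, the index set of the Dedekind zeta function. -/
abbrev NonzeroIdeal (R : Type*) [CommRing R] : Type _ := {I : Ideal R // I ≠ ⊥}

/-- Euler's function `φ(I) = #(R ⧸ I)ˣ` of a nonzero ideal. -/
noncomputable def NonzeroIdeal.totient (I : NonzeroIdeal R) : ℕ := Nat.card (R ⧸ I.1)ˣ

theorem NonzeroIdeal.totient_ne_zero [Ring.HasFiniteQuotients R] (I : NonzeroIdeal R) :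
    I.totient ≠ 0 := by
  have : Finite (R ⧸ I.1) := Ring.HasFiniteQuotients.finiteQuotient I.2
  exact Nat.card_pos.ne'

theorem NonzeroIdeal.one_le_totient [Ring.HasFiniteQuotients R] (I : NonzeroIdeal R) :
    (1 : ℝ) ≤ I.totient := by
  exact_mod_cast Nat.one_le_iff_ne_zero.mpr I.totient_ne_zero

variable [IsDedekindDomain R]

/-- The set of primes dividing a nonzero ideal. -/
noncomputable def NonzeroIdeal.primeFactors (I : NonzeroIdeal R) : Finset (HeightOneSpectrum R) :=
  (Ideal.finite_factors I.2).toFinset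

@[simp]
theorem NonzeroIdeal.mem_primeFactors {I : NonzeroIdeal R} {p : HeightOneSpectrum R} :
    p ∈ I.primeFactors ↔ p.asIdeal ∣ I.1 := by
  simp [primeFactors]

theorem NonzeroIdeal.primeFactors_nonempty {I : NonzeroIdeal R} (hI : I.1 ≠ ⊤) :
    I.primeFactors.Nonempty := by
  obtain ⟨P, hP, hle⟩ := Ideal.exists_le_maximal I.1 hI
  exact ⟨⟨P, hP.isPrime, ne_bot_of_le_ne_bot I.2 hle⟩,
    mem_primeFactors.mpr (Ideal.dvd_iff_le.mpr hle)⟩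

theorem NonzeroIdeal.primeFactors_eq_empty_of_isUnit {I : NonzeroIdeal R} (hI : IsUnit I.1) :
    I.primeFactors = ∅ :=
  Finset.eq_empty_of_forall_notMem fun p hp ↦
    p.prime.not_isUnit (isUnit_of_dvd_unit (mem_primeFactors.mp hp) hI)

theorem card_units_quotient_mul {I J : Ideal R} (h : IsRelPrime I J) :
    Nat.card (R ⧸ I * J)ˣ = Nat.card (R ⧸ I)ˣ * Nat.card (R ⧸ J)ˣ := by
  have hcop : IsCoprime I J := by
    rw [Ideal.isCoprime_iff_gcd, Ideal.one_eq_top]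
    exact Ideal.isUnit_iff.mp (h (gcd_dvd_left I J) (gcd_dvd_right I J))
  rw [← Nat.card_prod]
  exact Nat.card_congr ((Units.mapEquiv
    (Ideal.quotientMulEquivQuotientProd I J hcop).toMulEquiv).trans MulEquiv.prodUnits).toEquiv

theorem asIdeal_dvd_asIdeal_iff {p v : HeightOneSpectrum R} :
    v.asIdeal ∣ p.asIdeal ↔ v = p :=
  ⟨fun h ↦ HeightOneSpectrum.ext (associated_iff_eq.mp (v.prime.associated_of_dvd p.prime h)),
    fun h ↦ h ▸ dvd_rfl⟩

theorem NonzeroIdeal.primeFactors_prime_pow (p : HeightOneSpectrum R) {n : ℕ} (hn : n ≠ 0) :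
    primeFactors ⟨p.asIdeal ^ n, pow_ne_zero n p.ne_bot⟩ = {p} := by
  ext v
  rw [mem_primeFactors, Finset.mem_singleton, ← asIdeal_dvd_asIdeal_iff]
  exact v.prime.dvd_pow_iff_dvd hn

theorem NonzeroIdeal.primeFactors_mul [DecidableEq (HeightOneSpectrum R)] (I J : NonzeroIdeal R) :
    primeFactors ⟨I.1 * J.1, mul_ne_zero I.2 J.2⟩ = I.primeFactors ∪ J.primeFactors := by
  ext p
  simp [p.prime.dvd_mul]

theorem NonzeroIdeal.disjoint_primeFactors {I J : NonzeroIdeal R} (h : IsRelPrime I.1 J.1) :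
    Disjoint I.primeFactors J.primeFactors :=
  Finset.disjoint_left.mpr fun p hpI hpJ ↦
    p.prime.not_isUnit (h (mem_primeFactors.mp hpI) (mem_primeFactors.mp hpJ))

/-- The ideal `p * I`. -/
def NonzeroIdeal.mulPrime (p : HeightOneSpectrum R) (I : NonzeroIdeal R) : NonzeroIdeal R :=
  ⟨p.asIdeal * I.1, mul_ne_zero p.ne_bot I.2⟩

theorem NonzeroIdeal.mulPrime_injective (p : HeightOneSpectrum R) :
    Function.Injective (mulPrime p) := fun _ _ h ↦
  Subtype.ext (mul_left_cancel₀ (show p.asIdeal ≠ 0 from p.ne_bot) (congrArg Subtype.val h))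

theorem NonzeroIdeal.asIdeal_dvd_mulPrime {p v : HeightOneSpectrum R} {I : NonzeroIdeal R} :
    v.asIdeal ∣ (mulPrime p I).1 ↔ v = p ∨ v.asIdeal ∣ I.1 := by
  rw [mulPrime, v.prime.dvd_mul, asIdeal_dvd_asIdeal_iff]

theorem NonzeroIdeal.range_mulPrime (p : HeightOneSpectrum R) :
    Set.range (mulPrime p) = {I | p.asIdeal ∣ I.1} := by
  ext I
  refine ⟨?_, fun ⟨J, hJ⟩ ↦ ⟨⟨J, ?_⟩, Subtype.ext hJ.symm⟩⟩
  · rintro ⟨J, rfl⟩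
    exact dvd_mul_right _ _
  · rintro rfl
    exact I.2 (by rw [hJ, Ideal.mul_bot])

variable [Module.Free ℤ R]

/-- The absolute norm `N(p)` of a nonzero prime, as a real number. -/
noncomputable def primeNorm (p : HeightOneSpectrum R) : ℝ := p.asIdeal.absNorm

theorem primeNorm_nonneg (p : HeightOneSpectrum R) : 0 ≤ primeNorm p := Nat.cast_nonneg _

theorem one_sub_inv_primeNorm_le_one (p : HeightOneSpectrum R) : 1 - (primeNorm p)⁻¹ ≤ 1 := by
  linarith [inv_nonneg.mpr (primeNorm_nonneg p)]

/-- The absolute norm `N(I) = #(R ⧸ I)` of a nonzero ideal. -/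
noncomputable def NonzeroIdeal.norm (I : NonzeroIdeal R) : ℕ := I.1.absNorm

theorem NonzeroIdeal.norm_mulPrime (p : HeightOneSpectrum R) (I : NonzeroIdeal R) :
    ((mulPrime p I).norm : ℝ) = primeNorm p * I.norm := by
  simp [norm, mulPrime, primeNorm]

variable [Ring.HasFiniteQuotients R]

theorem NonzeroIdeal.norm_ne_zero (I : NonzeroIdeal R) : I.norm ≠ 0 :=
  (Ideal.absNorm_ne_zero_iff I.1).mpr (Ring.HasFiniteQuotients.finiteQuotient I.2)

theorem NonzeroIdeal.finite_norm_le (n : ℕ) : {I : NonzeroIdeal R | I.norm ≤ n}.Finite :=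
  (Ring.HasFiniteQuotients.finite_absNorm_le n).preimage Subtype.val_injective.injOn

theorem two_le_primeNorm (p : HeightOneSpectrum R) : 2 ≤ primeNorm p := by
  have h0 : p.asIdeal.absNorm ≠ 0 := NonzeroIdeal.norm_ne_zero ⟨p.asIdeal, p.ne_bot⟩
  have h1 : p.asIdeal.absNorm ≠ 1 := Ideal.absNorm_eq_one_iff.not.mpr p.isPrime.ne_top
  rw [primeNorm]
  exact_mod_cast (by omega : 2 ≤ p.asIdeal.absNorm)

theorem half_le_one_sub_inv_primeNorm (p : HeightOneSpectrum R) :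
    2⁻¹ ≤ 1 - (primeNorm p)⁻¹ := by
  linarith [inv_anti₀ two_pos (two_le_primeNorm p)]

theorem finite_primeNorm_le (x : ℝ) : {p : HeightOneSpectrum R | primeNorm p ≤ x}.Finite :=
  (Ring.HasFiniteQuotients.finite_absNorm_heightOneSpectrum_le ⌊x⌋₊).subset fun _ hp ↦
    Nat.le_floor hp

theorem card_units_quotient_prime_pow (p : HeightOneSpectrum R) {n : ℕ} (hn : n ≠ 0) :
    (Nat.card (R ⧸ p.asIdeal ^ n)ˣ : ℝ) = (p.asIdeal ^ n).absNorm * (1 - (primeNorm p)⁻¹) := by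
  have := p.isMaximal
  have : Finite (R ⧸ p.asIdeal ^ n) :=
    Ring.HasFiniteQuotients.finiteQuotient (pow_ne_zero n p.ne_bot)
  let f : R ⧸ p.asIdeal ^ n →+* R ⧸ p.asIdeal := Ideal.Quotient.factor (Ideal.pow_le_self hn)
  rw [primeNorm, Ideal.absNorm_apply, Ideal.absNorm_apply, Submodule.cardQuot_apply,
    Submodule.cardQuot_apply]
  refine card_units_of_isUnit_iff_map_ne_zero f (Ideal.Quotient.factor_surjective _) fun x ↦ ?_
  obtain ⟨y, rfl⟩ := Ideal.Quotient.mk_surjective x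
  simp [f, Ideal.Quotient.isUnit_mk_pow_iff_notMem _ hn, Ideal.Quotient.eq_zero_iff_mem]

theorem NonzeroIdeal.totient_eq_norm_mul_prod (I : NonzeroIdeal R) :
    (I.totient : ℝ) = I.norm * ∏ p ∈ I.primeFactors, (1 - (primeNorm p)⁻¹) := by
  classical
  have of_isUnit {I : NonzeroIdeal R} (hI : IsUnit I.1) :
      (I.totient : ℝ) = I.norm * ∏ p ∈ I.primeFactors, (1 - (primeNorm p)⁻¹) := by
    have htop := Ideal.isUnit_iff.mp hI
    have : Subsingleton (R ⧸ I.1) := Ideal.Quotient.subsingleton_iff.mpr htop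
    simp [primeFactors_eq_empty_of_isUnit hI, totient, norm, htop]
  obtain ⟨I, hI⟩ := I
  induction I using UniqueFactorizationMonoid.induction_on_coprime with
  | h0 => exact absurd rfl hI
  | h1 hunit => exact of_isUnit hunit
  | @hpr P n hP =>
    rcases eq_or_ne n 0 with rfl | hn
    · exact of_isUnit (by simp)
    let p : HeightOneSpectrum R := ⟨P, Ideal.isPrime_of_prime hP, hP.ne_zero⟩
    rw [primeFactors_prime_pow p hn, Finset.prod_singleton]
    exact card_units_quotient_prime_pow p hn
  | @hcp I J hIJ ihI ihJ =>
    let I' : NonzeroIdeal R := ⟨I, left_ne_zero_of_mul hI⟩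
    let J' : NonzeroIdeal R := ⟨J, right_ne_zero_of_mul hI⟩
    have ihI := ihI I'.2
    have ihJ := ihJ J'.2
    simp only [totient, norm] at ihI ihJ ⊢
    rw [primeFactors_mul I' J', Finset.prod_union (disjoint_primeFactors hIJ),
      card_units_quotient_mul hIJ, map_mul, Nat.cast_mul, Nat.cast_mul, ihI, ihJ,
      mul_mul_mul_comm]

end NonzeroIdeal

section PartialTotient

variable {R : Type*} [CommRing R] [IsDedekindDomain R] [Module.Free ℤ R]

open Classical in
/-- The totient `φ_S(I) = N(I) ∏_{p ∈ S, p ∣ I} (1 - 1 / N(p))` that only sees the primes in `S`. -/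
noncomputable def partialTotient (S : Finset (HeightOneSpectrum R)) (I : NonzeroIdeal R) : ℝ :=
  I.norm * ∏ p ∈ S with p.asIdeal ∣ I.1, (1 - (primeNorm p)⁻¹)

variable {S : Finset (HeightOneSpectrum R)} {p : HeightOneSpectrum R} {I : NonzeroIdeal R}

theorem partialTotient_empty : partialTotient ∅ I = I.norm := by
  simp [partialTotient]

theorem partialTotient_mulPrime (hp : p ∉ S) (I : NonzeroIdeal R) :
    partialTotient S (I.mulPrime p) = primeNorm p * partialTotient S I := by
  classical
  have hfilter : {v ∈ S | v.asIdeal ∣ (I.mulPrime p).1} = {v ∈ S | v.asIdeal ∣ I.1} :=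
    Finset.filter_congr fun v hv ↦ by
      simp [NonzeroIdeal.asIdeal_dvd_mulPrime, ne_of_mem_of_not_mem hv hp]
  rw [partialTotient, partialTotient, hfilter, NonzeroIdeal.norm_mulPrime, mul_assoc]

theorem partialTotient_insert_of_not_dvd [DecidableEq (HeightOneSpectrum R)]
    (h : ¬ p.asIdeal ∣ I.1) : partialTotient (insert p S) I = partialTotient S I := by
  simp [partialTotient, Finset.filter_insert, h]

theorem partialTotient_insert_of_dvd [DecidableEq (HeightOneSpectrum R)] (hp : p ∉ S)
    (h : p.asIdeal ∣ I.1) :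
    partialTotient (insert p S) I = (1 - (primeNorm p)⁻¹) * partialTotient S I := by
  rw [partialTotient, partialTotient, Finset.filter_insert, if_pos h,
    Finset.prod_insert (by simp [hp]), mul_left_comm]

variable [Ring.HasFiniteQuotients R]

theorem partialTotient_insert_mulPrime [DecidableEq (HeightOneSpectrum R)] (hp : p ∉ S)
    (I : NonzeroIdeal R) :
    partialTotient (insert p S) (I.mulPrime p) = (primeNorm p - 1) * partialTotient S I := by
  have := two_le_primeNorm p
  rw [partialTotient_insert_of_dvd hp (NonzeroIdeal.asIdeal_dvd_mulPrime.mpr (.inl rfl)),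
    partialTotient_mulPrime hp]
  field_simp

theorem norm_le_two_pow_mul_partialTotient (S : Finset (HeightOneSpectrum R))
    (I : NonzeroIdeal R) : (I.norm : ℝ) ≤ 2 ^ S.card * partialTotient S I := by
  classical
  have hprod : ∏ _p ∈ S, (2⁻¹ : ℝ) ≤ ∏ p ∈ S with p.asIdeal ∣ I.1, (1 - (primeNorm p)⁻¹) := by
    rw [Finset.prod_filter]
    refine Finset.prod_le_prod (fun _ _ ↦ by positivity) fun p _ ↦ ?_
    split_ifs
    exacts [half_le_one_sub_inv_primeNorm p, by norm_num]
  calc (I.norm : ℝ) = 2 ^ S.card * (I.norm * ∏ _p ∈ S, (2⁻¹ : ℝ)) := by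
        rw [Finset.prod_const, inv_pow]; field_simp
    _ ≤ 2 ^ S.card * partialTotient S I := by unfold partialTotient; gcongr

theorem partialTotient_nonneg (S : Finset (HeightOneSpectrum R)) (I : NonzeroIdeal R) :
    0 ≤ partialTotient S I :=
  mul_nonneg (Nat.cast_nonneg _) <| Finset.prod_nonneg fun p _ ↦
    le_trans (by norm_num) (half_le_one_sub_inv_primeNorm p)

open Classical in
theorem totient_eq_partialTotient_mul_prod (S : Finset (HeightOneSpectrum R))
    (I : NonzeroIdeal R) :
    (I.totient : ℝ) = partialTotient S I *
      ∏ p ∈ I.primeFactors with p ∉ S, (1 - (primeNorm p)⁻¹) := by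
  have hfilter : {p ∈ S | p.asIdeal ∣ I.1} = {p ∈ I.primeFactors | p ∈ S} := by
    ext p
    simp [and_comm]
  rw [I.totient_eq_norm_mul_prod, partialTotient, hfilter, mul_assoc,
    Finset.prod_filter_mul_prod_filter_not]

theorem totient_eq_partialTotient (h : I.primeFactors ⊆ S) :
    (I.totient : ℝ) = partialTotient S I := by
  classical
  rw [totient_eq_partialTotient_mul_prod S, Finset.filter_false_of_mem fun p hp ↦
    not_not.mpr (h hp), Finset.prod_empty, mul_one]

theorem totient_le_partialTotient (S : Finset (HeightOneSpectrum R)) (I : NonzeroIdeal R) :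
    (I.totient : ℝ) ≤ partialTotient S I := by
  classical
  rw [totient_eq_partialTotient_mul_prod S]
  refine mul_le_of_le_one_right (partialTotient_nonneg S I) <| Finset.prod_le_one
    (fun p _ ↦ le_trans (by norm_num) (half_le_one_sub_inv_primeNorm p))
    fun p _ ↦ one_sub_inv_primeNorm_le_one p

theorem one_le_one_sub_inv_mul_exp {q : ℝ} (hq : 1 < q) :
    1 ≤ (1 - q⁻¹) * Real.exp (q - 1)⁻¹ := by
  have h1 : 0 < q - 1 := sub_pos.mpr hq
  calc 1 = (1 - q⁻¹) * ((q - 1)⁻¹ + 1) := by field_simp; ring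
    _ ≤ (1 - q⁻¹) * Real.exp (q - 1)⁻¹ := by
        gcongr
        exacts [sub_nonneg.mpr (inv_le_one_of_one_le₀ hq.le), Real.add_one_le_exp _]

open Classical in
theorem partialTotient_le_totient_mul_exp (S : Finset (HeightOneSpectrum R))
    (I : NonzeroIdeal R) :
    partialTotient S I ≤
      I.totient * Real.exp (∑ p ∈ I.primeFactors with p ∉ S, (primeNorm p - 1)⁻¹) := by
  rw [totient_eq_partialTotient_mul_prod S, mul_assoc, Real.exp_sum, ← Finset.prod_mul_distrib]
  refine le_mul_of_one_le_right (partialTotient_nonneg S I) <|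
    Finset.one_le_prod fun p _ ↦ one_le_one_sub_inv_mul_exp ?_
  linarith [two_le_primeNorm p]

theorem primeNorm_sub_one_mul_totient_le (p : HeightOneSpectrum R) (I : NonzeroIdeal R) :
    (primeNorm p - 1) * I.totient ≤ (I.mulPrime p).totient := by
  classical
  have hsub : (I.mulPrime p).primeFactors ⊆ insert p (I.primeFactors.erase p) := by
    intro v hv
    rw [NonzeroIdeal.mem_primeFactors, NonzeroIdeal.asIdeal_dvd_mulPrime] at hv
    by_cases h : v = p <;> simp_all
  rw [totient_eq_partialTotient hsub, partialTotient_insert_mulPrime (Finset.notMem_erase p _)]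
  gcongr
  · linarith [two_le_primeNorm p]
  · exact totient_le_partialTotient _ I

end PartialTotient

section EulerProduct

variable {R : Type*} [CommRing R] [IsDedekindDomain R]

/-- The nonzero ideals with no prime factor in `S`. -/
def siftedIdeals (S : Finset (HeightOneSpectrum R)) : Set (NonzeroIdeal R) :=
  {I | ∀ p ∈ S, ¬ p.asIdeal ∣ I.1}

theorem mulPrime_mem_siftedIdeals_iff {S : Finset (HeightOneSpectrum R)}
    {p : HeightOneSpectrum R} (hp : p ∉ S) {I : NonzeroIdeal R} :
    I.mulPrime p ∈ siftedIdeals S ↔ I ∈ siftedIdeals S :=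
  forall₂_congr fun v hv ↦ by
    simp [NonzeroIdeal.asIdeal_dvd_mulPrime, ne_of_mem_of_not_mem hv hp]

theorem siftedIdeals_eq_union [DecidableEq (HeightOneSpectrum R)]
    {S : Finset (HeightOneSpectrum R)} {p : HeightOneSpectrum R} (hp : p ∉ S) :
    siftedIdeals S = siftedIdeals (insert p S) ∪ NonzeroIdeal.mulPrime p '' siftedIdeals S := by
  have himage : NonzeroIdeal.mulPrime p '' siftedIdeals S =
      siftedIdeals S ∩ {I | p.asIdeal ∣ I.1} := by
    rw [← NonzeroIdeal.range_mulPrime, ← Set.image_preimage_eq_inter_range]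
    congr 1
    ext I
    exact (mulPrime_mem_siftedIdeals_iff hp).symm
  rw [himage]
  ext I
  simp only [siftedIdeals, Finset.forall_mem_insert, Set.mem_union, Set.mem_inter_iff,
    Set.mem_ofPred_eq]
  tauto

theorem disjoint_siftedIdeals_insert_image_mulPrime [DecidableEq (HeightOneSpectrum R)]
    (S : Finset (HeightOneSpectrum R)) (p : HeightOneSpectrum R) (A : Set (NonzeroIdeal R)) :
    Disjoint (siftedIdeals (insert p S)) (NonzeroIdeal.mulPrime p '' A) := by
  rw [Set.disjoint_left]
  rintro _ hI ⟨J, -, rfl⟩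
  exact hI p (Finset.mem_insert_self p S) (NonzeroIdeal.asIdeal_dvd_mulPrime.mpr (.inl rfl))

variable [Module.Free ℤ R]

variable (R) in
/-- The Dedekind zeta function `ζ_R(s) = ∑_I N(I)^{-s}` at a real argument; it has the junk value
`0` where the series diverges. -/
noncomputable def idealZeta (s : ℝ) : ℝ := ∑' I : NonzeroIdeal R, (I.norm : ℝ) ^ (-s)

variable {s : ℝ} (hs : Summable fun I : NonzeroIdeal R ↦ (I.norm : ℝ) ^ (-s))

include hs

theorem tsum_siftedIdeals_insert [DecidableEq (HeightOneSpectrum R)]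
    {S : Finset (HeightOneSpectrum R)} {p : HeightOneSpectrum R} (hp : p ∉ S) :
    ∑' I : siftedIdeals (insert p S), (I.1.norm : ℝ) ^ (-s) =
      (∑' I : siftedIdeals S, (I.1.norm : ℝ) ^ (-s)) * (1 - primeNorm p ^ (-s)) := by
  have hsplit : ∑' I : siftedIdeals S, (I.1.norm : ℝ) ^ (-s) =
      ∑' I : siftedIdeals (insert p S), (I.1.norm : ℝ) ^ (-s) +
        ∑' I : NonzeroIdeal.mulPrime p '' siftedIdeals S, (I.1.norm : ℝ) ^ (-s) := by
    conv_lhs => rw [siftedIdeals_eq_union hp]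
    exact (hs.subtype _).tsum_union_disjoint
      (disjoint_siftedIdeals_insert_image_mulPrime S p _) (hs.subtype _)
  have himage : ∑' I : NonzeroIdeal.mulPrime p '' siftedIdeals S, (I.1.norm : ℝ) ^ (-s) =
      primeNorm p ^ (-s) * ∑' I : siftedIdeals S, (I.1.norm : ℝ) ^ (-s) := by
    rw [tsum_image (fun I : NonzeroIdeal R ↦ (I.norm : ℝ) ^ (-s))
      (NonzeroIdeal.mulPrime_injective p).injOn, ← tsum_mul_left]
    refine tsum_congr fun I ↦ ?_
    rw [NonzeroIdeal.norm_mulPrime, Real.mul_rpow (primeNorm_nonneg p) (Nat.cast_nonneg _)]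
  linear_combination -hsplit - himage

theorem tsum_siftedIdeals_eq_idealZeta_mul_prod (S : Finset (HeightOneSpectrum R)) :
    ∑' I : siftedIdeals S, (I.1.norm : ℝ) ^ (-s) =
      idealZeta R s * ∏ p ∈ S, (1 - primeNorm p ^ (-s)) := by
  classical
  induction S using Finset.induction_on with
  | empty =>
    rw [tsum_subtype (siftedIdeals ∅) fun I ↦ (I.norm : ℝ) ^ (-s)]
    simp [siftedIdeals, idealZeta]
  | insert p S hp ih =>
    rw [tsum_siftedIdeals_insert hs hp, ih, Finset.prod_insert hp]
    ring

theorem tendsto_tsum_siftedIdeals :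
    Tendsto (fun S : Finset (HeightOneSpectrum R) ↦
      ∑' I : siftedIdeals S, (I.1.norm : ℝ) ^ (-s)) atTop (𝓝 1) := by
  let top : NonzeroIdeal R := ⟨⊤, top_ne_bot⟩
  let f : NonzeroIdeal R → ℝ := fun I ↦ (I.norm : ℝ) ^ (-s)
  have hlimit : ∑' I, Set.indicator {top} f I = 1 := by
    rw [← tsum_subtype, tsum_singleton]
    simp [f, top, NonzeroIdeal.norm]
  have hindicator (S : Finset (HeightOneSpectrum R)) :
      ∑' I : siftedIdeals S, f I = ∑' I, (siftedIdeals S).indicator f I := tsum_subtype _ f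
  rw [← hlimit, funext hindicator]
  refine tendsto_tsum_of_dominated_convergence hs (fun I ↦ tendsto_const_nhds.congr' ?_)
    (Eventually.of_forall fun S I ↦ (norm_indicator_le_norm_self f I).trans_eq
      (Real.norm_of_nonneg (by positivity)))
  by_cases hI : I.1 = ⊤
  · obtain rfl : I = top := Subtype.ext hI
    refine Eventually.of_forall fun S ↦ ?_
    have hmem : top ∈ siftedIdeals S := fun p _ hp ↦
      p.prime.not_isUnit (isUnit_of_dvd_one (by rwa [Ideal.one_eq_top]))
    simp only [Set.indicator_of_mem hmem, Set.indicator_of_mem (Set.mem_singleton top)]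
  · obtain ⟨p, hp⟩ := NonzeroIdeal.primeFactors_nonempty hI
    filter_upwards [eventually_ge_atTop {p}] with S hS
    have hnotMem : I ∉ siftedIdeals S := fun h ↦
      h p (hS (Finset.mem_singleton_self p)) (NonzeroIdeal.mem_primeFactors.mp hp)
    have hne : I ∉ ({top} : Set (NonzeroIdeal R)) := fun h ↦ hI (congrArg Subtype.val h)
    rw [Set.indicator_of_notMem hne, Set.indicator_of_notMem hnotMem]

theorem idealZeta_ne_zero : idealZeta R s ≠ 0 := by
  intro h
  have hlim := tendsto_tsum_siftedIdeals hs
  simp_rw [tsum_siftedIdeals_eq_idealZeta_mul_prod hs, h, zero_mul] at hlim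
  exact zero_ne_one (tendsto_nhds_unique tendsto_const_nhds hlim)

theorem tendsto_prod_one_sub_primeNorm_rpow :
    Tendsto (fun S : Finset (HeightOneSpectrum R) ↦ ∏ p ∈ S, (1 - primeNorm p ^ (-s))) atTop
      (𝓝 (idealZeta R s)⁻¹) := by
  have hlim := (tendsto_tsum_siftedIdeals hs).const_mul (idealZeta R s)⁻¹
  simpa only [tsum_siftedIdeals_eq_idealZeta_mul_prod hs,
    inv_mul_cancel_left₀ (idealZeta_ne_zero hs), mul_one] using hlim

end EulerProduct

section TotientConstant

/-- The density `∏_{p ∈ S} (1 - 1/N(p) + 1/(N(p) - 1))` of the values of `partialTotient S`,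
relative to the density of ideals. -/
noncomputable def partialTotientDensity {R : Type*} [CommRing R] [IsDedekindDomain R]
    [Module.Free ℤ R] (S : Finset (HeightOneSpectrum R)) : ℝ :=
  ∏ p ∈ S, (1 - (primeNorm p)⁻¹ + (primeNorm p - 1)⁻¹)

theorem one_sub_inv_add_inv_sub_one {q : ℝ} (hq : 1 < q) :
    1 - q⁻¹ + (q - 1)⁻¹ =
      (1 - q ^ (-6 : ℝ)) / ((1 - q ^ (-2 : ℝ)) * (1 - q ^ (-3 : ℝ))) := by
  have hq0 : 0 < q := zero_lt_one.trans hq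
  have rpow_neg (n : ℕ) : q ^ (-(n : ℝ)) = (q ^ n)⁻¹ := by
    rw [Real.rpow_neg hq0.le, Real.rpow_natCast]
  have h1 : q - 1 ≠ 0 := (sub_pos.mpr hq).ne'
  have h2 : q ^ 2 - 1 ≠ 0 := (sub_pos.mpr (one_lt_pow₀ hq two_ne_zero)).ne'
  have h3 : q ^ 3 - 1 ≠ 0 := (sub_pos.mpr (one_lt_pow₀ hq three_ne_zero)).ne'
  rw [show (-6 : ℝ) = -(6 : ℕ) by norm_num, show (-2 : ℝ) = -(2 : ℕ) by norm_num,
    show (-3 : ℝ) = -(3 : ℕ) by norm_num, rpow_neg, rpow_neg, rpow_neg]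
  field_simp
  ring

variable {R : Type*} [CommRing R] [IsDedekindDomain R] [Module.Free ℤ R]
  [Ring.HasFiniteQuotients R]

theorem tendsto_partialTotientDensity
    (hs : ∀ s : ℝ, 1 < s → Summable fun I : NonzeroIdeal R ↦ (I.norm : ℝ) ^ (-s)) :
    Tendsto (partialTotientDensity (R := R)) atTop
      (𝓝 (idealZeta R 2 * idealZeta R 3 / idealZeta R 6)) := by
  have hs2 := hs 2 (by norm_num)
  have hs3 := hs 3 (by norm_num)
  have hs6 := hs 6 (by norm_num)
  have hlim := (tendsto_prod_one_sub_primeNorm_rpow hs6).div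
    ((tendsto_prod_one_sub_primeNorm_rpow hs2).mul (tendsto_prod_one_sub_primeNorm_rpow hs3))
    (mul_ne_zero (inv_ne_zero (idealZeta_ne_zero hs2)) (inv_ne_zero (idealZeta_ne_zero hs3)))
  rw [← mul_inv, inv_div_inv] at hlim
  refine hlim.congr fun S ↦ ?_
  rw [Pi.div_apply, ← Finset.prod_mul_distrib, ← Finset.prod_div_distrib]
  refine Finset.prod_congr rfl fun p _ ↦ (one_sub_inv_add_inv_sub_one ?_).symm
  linarith [two_le_primeNorm p]

end TotientConstant

section LinearGrowth

variable {f : ℝ → ℝ} {L : ℝ}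

theorem tendsto_comp_div_const_div (hf : Tendsto (fun x ↦ f x / x) atTop (𝓝 L)) {a : ℝ}
    (ha : 0 < a) : Tendsto (fun x ↦ f (x / a) / x) atTop (𝓝 (L * a⁻¹)) := by
  refine ((hf.comp (tendsto_id.atTop_div_const ha)).mul_const a⁻¹).congr fun x ↦ ?_
  simp only [Function.comp_apply, id_eq]
  field_simp

theorem exists_le_mul_of_tendsto_div (hf : Tendsto (fun x ↦ f x / x) atTop (𝓝 L))
    (hmono : Monotone f) {δ : ℝ} (hδ : 0 < δ) (hzero : ∀ x < δ, f x = 0) :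
    ∃ c, ∀ x, 0 ≤ x → f x ≤ c * x := by
  obtain ⟨X, hX⟩ := eventually_atTop.mp <|
    (hf.eventually_le_const (lt_add_one L)).and (eventually_gt_atTop 0)
  have hnonneg (x : ℝ) : 0 ≤ f x := by
    rcases lt_or_ge x δ with h | h
    · exact (hzero x h).ge
    · exact (hzero 0 hδ).symm.trans_le (hmono (hδ.le.trans h))
  refine ⟨max (L + 1) (f X / δ), fun x hx ↦ ?_⟩
  rcases le_total X x with h | h
  · obtain ⟨hle, hpos⟩ := hX x h
    calc f x ≤ (L + 1) * x := (div_le_iff₀ hpos).mp hle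
      _ ≤ _ := by gcongr; exact le_max_left _ _
  rcases lt_or_ge x δ with hxδ | hxδ
  · have := hnonneg X
    rw [hzero x hxδ]
    positivity
  · calc f x ≤ f X / δ * δ := (hmono h).trans_eq (div_mul_cancel₀ _ hδ.ne').symm
      _ ≤ f X / δ * x := by have := hnonneg X; gcongr
      _ ≤ _ := by gcongr; exact le_max_right _ _

-- The supremum `M` of `f y / y` over `(0, x]` satisfies `M ≤ b + M / 2`.
theorem le_two_mul_of_forall_le_add_half (hmono : Monotone f) (hzero : ∀ x < 1, f x = 0) {b : ℝ}
    (hstep : ∀ M x, 0 ≤ x → (∀ y, 0 ≤ y → y ≤ x → f y ≤ M * y) → f x ≤ (b + M / 2) * x)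
    {x : ℝ} (hx : 0 ≤ x) : f x ≤ 2 * b * x := by
  rcases hx.eq_or_lt with rfl | hx
  · simp [hzero 0 one_pos]
  let ratios : Set ℝ := (fun y ↦ f y / y) '' Set.Ioc 0 x
  have hmem {y : ℝ} (hy : 0 < y) (hyx : y ≤ x) : f y / y ∈ ratios := ⟨y, ⟨hy, hyx⟩, rfl⟩
  have hbdd : BddAbove ratios := by
    have hfx : 0 ≤ f x := by
      rw [← hzero 0 one_pos]
      exact hmono hx.le
    refine ⟨f x, ?_⟩
    rintro _ ⟨y, ⟨hy, hyx⟩, rfl⟩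
    rcases lt_or_ge y 1 with h | h
    · simpa [hzero y h] using hfx
    · exact (div_le_iff₀ hy).mpr ((hmono hyx).trans (le_mul_of_one_le_right hfx h))
  have hle {y : ℝ} (hy : 0 ≤ y) (hyx : y ≤ x) : f y ≤ sSup ratios * y := by
    rcases hy.eq_or_lt with rfl | hy
    · simp [hzero 0 one_pos]
    · exact (div_le_iff₀ hy).mp (le_csSup hbdd (hmem hy hyx))
  have hsup : sSup ratios ≤ b + sSup ratios / 2 := by
    refine csSup_le ⟨_, hmem hx le_rfl⟩ ?_
    rintro _ ⟨y, ⟨hy, hyx⟩, rfl⟩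
    exact (div_le_iff₀ hy).mpr <| hstep _ y hy.le fun z hz hzy ↦ hle hz (hzy.trans hyx)
  exact (hle hx.le le_rfl).trans (by gcongr; linarith)

end LinearGrowth

section Counting

variable {R : Type*} [CommRing R] [IsDedekindDomain R]

theorem ncard_sublevel_inter_dvd {g h : NonzeroIdeal R → ℝ} {p : HeightOneSpectrum R} {c : ℝ}
    (hc : 0 < c) (hg : ∀ I, g (I.mulPrime p) = c * h I) (x : ℝ) :
    ({I | g I ≤ x} ∩ {I | p.asIdeal ∣ I.1}).ncard = {I | h I ≤ x / c}.ncard := by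
  rw [← NonzeroIdeal.range_mulPrime, ← Set.image_preimage_eq_inter_range,
    Set.ncard_image_of_injective _ (NonzeroIdeal.mulPrime_injective p)]
  congr 1
  ext I
  simp [hg, le_div_iff₀' hc]

variable [Module.Free ℤ R]

variable (R) in
/-- The nonzero ideals of `R` have density `κ`: there are `κ x + o(x)` of them of norm at
most `x`. -/
def HasIdealDensity (κ : ℝ) : Prop :=
  Tendsto (fun x : ℝ ↦ ({I : NonzeroIdeal R | (I.norm : ℝ) ≤ x}.ncard : ℝ) / x) atTop (𝓝 κ)

/-- The number of nonzero ideals `I` with `partialTotient S I ≤ x`. -/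
noncomputable def partialTotientCount (S : Finset (HeightOneSpectrum R)) (x : ℝ) : ℕ :=
  {I | partialTotient S I ≤ x}.ncard

variable {κ : ℝ}

theorem HasIdealDensity.tendsto_ncard_norm_le_div (hκ : HasIdealDensity R κ) :
    Tendsto (fun n : ℕ ↦ ({I : NonzeroIdeal R | I.norm ≤ n}.ncard : ℝ) / n) atTop (𝓝 κ) := by
  simpa [HasIdealDensity, Function.comp_def] using hκ.comp tendsto_natCast_atTop_atTop

variable [Ring.HasFiniteQuotients R]

theorem HasIdealDensity.summable_norm_rpow (hκ : HasIdealDensity R κ) {s : ℝ} (hs : 1 < s) :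
    Summable fun I : NonzeroIdeal R ↦ (I.norm : ℝ) ^ (-s) :=
  summable_natCast_rpow NonzeroIdeal.norm_ne_zero NonzeroIdeal.finite_norm_le
    hκ.tendsto_ncard_norm_le_div hs

theorem HasIdealDensity.tendsto_sub_one_mul_idealZeta (hκ : HasIdealDensity R κ) :
    Tendsto (fun s ↦ (s - 1) * idealZeta R s) (𝓝[>] 1) (𝓝 κ) :=
  tendsto_sub_one_mul_tsum_natCast_rpow NonzeroIdeal.norm_ne_zero NonzeroIdeal.finite_norm_le
    hκ.tendsto_ncard_norm_le_div

theorem finite_partialTotient_le (S : Finset (HeightOneSpectrum R)) (x : ℝ) :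
    {I | partialTotient S I ≤ x}.Finite := by
  refine (NonzeroIdeal.finite_norm_le ⌊2 ^ S.card * x⌋₊).subset fun I hI ↦ Nat.le_floor ?_
  rw [Set.mem_ofPred_eq] at hI
  exact (norm_le_two_pow_mul_partialTotient S I).trans (by gcongr)

theorem partialTotientCount_mono (S : Finset (HeightOneSpectrum R)) :
    Monotone (partialTotientCount S) := fun _ y hxy ↦
  Set.ncard_le_ncard (fun _ hI ↦ le_trans hI hxy) (finite_partialTotient_le S y)

theorem partialTotientCount_eq_zero (S : Finset (HeightOneSpectrum R)) {x : ℝ}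
    (hx : x < (2 ^ S.card)⁻¹) : partialTotientCount S x = 0 := by
  have hempty : {I : NonzeroIdeal R | partialTotient S I ≤ x} = ∅ := by
    refine Set.eq_empty_of_forall_notMem fun I hI ↦ ?_
    have hnorm : (1 : ℝ) ≤ I.norm := by exact_mod_cast Nat.one_le_iff_ne_zero.mpr I.norm_ne_zero
    refine (hI.trans_lt hx).not_ge ?_
    rw [inv_le_iff_one_le_mul₀' (by positivity)]
    exact hnorm.trans (norm_le_two_pow_mul_partialTotient S I)
  rw [partialTotientCount, hempty, Set.ncard_empty]

theorem partialTotientCount_insert [DecidableEq (HeightOneSpectrum R)]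
    {S : Finset (HeightOneSpectrum R)} {p : HeightOneSpectrum R} (hp : p ∉ S) (x : ℝ) :
    partialTotientCount (insert p S) x + partialTotientCount S (x / primeNorm p) =
      partialTotientCount S x + partialTotientCount S (x / (primeNorm p - 1)) := by
  have hq := two_le_primeNorm p
  have hdiff : {I | partialTotient (insert p S) I ≤ x} \ {I | p.asIdeal ∣ I.1} =
      {I | partialTotient S I ≤ x} \ {I | p.asIdeal ∣ I.1} := by
    ext I
    simp only [Set.mem_sdiff, Set.mem_ofPred_eq, and_congr_left_iff]
    intro h
    rw [partialTotient_insert_of_not_dvd h]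
  have hinsert := ncard_sublevel_inter_dvd (by linarith) (partialTotient_insert_mulPrime hp) x
  have hself := ncard_sublevel_inter_dvd (by linarith) (partialTotient_mulPrime hp) x
  simp only [partialTotientCount]
  rw [← hinsert, ← hself,
    ← Set.ncard_inter_add_ncard_sdiff_eq_ncard _ {I | p.asIdeal ∣ I.1}
      (finite_partialTotient_le (insert p S) x),
    ← Set.ncard_inter_add_ncard_sdiff_eq_ncard _ {I | p.asIdeal ∣ I.1}
      (finite_partialTotient_le S x), hdiff]
  ring

theorem HasIdealDensity.tendsto_partialTotientCount_div (hκ : HasIdealDensity R κ)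
    (S : Finset (HeightOneSpectrum R)) :
    Tendsto (fun x ↦ (partialTotientCount S x : ℝ) / x) atTop
      (𝓝 (κ * partialTotientDensity S)) := by
  classical
  induction S using Finset.induction_on with
  | empty => simpa [HasIdealDensity, partialTotientCount, partialTotient_empty,
      partialTotientDensity] using hκ
  | insert p S hp ih =>
    have hq := two_le_primeNorm p
    have hlim := (ih.add (tendsto_comp_div_const_div ih (a := primeNorm p - 1) (by linarith))).sub
      (tendsto_comp_div_const_div ih (a := primeNorm p) (by linarith))
    convert! hlim using 1
    · ext x
      have hrec := partialTotientCount_insert hp x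
      rify at hrec
      rw [eq_sub_of_add_eq hrec, sub_div, add_div]
    · rw [partialTotientDensity, Finset.prod_insert hp, ← partialTotientDensity]
      ring_nf

theorem HasIdealDensity.exists_partialTotientCount_le (hκ : HasIdealDensity R κ)
    (S : Finset (HeightOneSpectrum R)) :
    ∃ c, ∀ x, 0 ≤ x → (partialTotientCount S x : ℝ) ≤ c * x :=
  exists_le_mul_of_tendsto_div (hκ.tendsto_partialTotientCount_div S)
    (fun _ _ h ↦ Nat.cast_le.mpr (partialTotientCount_mono S h))
    (δ := (2 ^ S.card)⁻¹) (by positivity)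
    fun _ hx ↦ by rw [partialTotientCount_eq_zero S hx, Nat.cast_zero]

end Counting

section TotientCount

variable {R : Type*} [CommRing R]

variable (R) in
/-- The number of nonzero ideals `I` of `R` with `φ(I) ≤ x`. -/
noncomputable def totientCount (x : ℝ) : ℕ := {I : NonzeroIdeal R | (I.totient : ℝ) ≤ x}.ncard

theorem totientCount_eq_zero [Ring.HasFiniteQuotients R] {x : ℝ} (hx : x < 1) :
    totientCount R x = 0 := by
  have hempty : {I : NonzeroIdeal R | (I.totient : ℝ) ≤ x} = ∅ :=
    Set.eq_empty_of_forall_notMem fun I hI ↦ (hI.trans_lt hx).not_ge I.one_le_totient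
  rw [totientCount, hempty, Set.ncard_empty]

variable [IsDedekindDomain R] [Module.Free ℤ R] [Ring.HasFiniteQuotients R]

theorem NonzeroIdeal.primeNorm_le_totient_add_one {p : HeightOneSpectrum R} {I : NonzeroIdeal R}
    (h : p.asIdeal ∣ I.1) : primeNorm p ≤ I.totient + 1 := by
  rw [← Set.mem_ofPred_eq (p := fun I : NonzeroIdeal R ↦ p.asIdeal ∣ I.1), ← range_mulPrime] at h
  obtain ⟨J, rfl⟩ := h
  have hJ := J.one_le_totient
  nlinarith [primeNorm_sub_one_mul_totient_le p J, two_le_primeNorm p]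

theorem finite_totient_le (x : ℝ) : {I : NonzeroIdeal R | (I.totient : ℝ) ≤ x}.Finite := by
  refine (finite_partialTotient_le (finite_primeNorm_le (x + 1)).toFinset x).subset fun I hI ↦ ?_
  have hsub : I.primeFactors ⊆ (finite_primeNorm_le (x + 1)).toFinset := fun p hp ↦ by
    rw [Set.Finite.mem_toFinset]
    exact (NonzeroIdeal.primeNorm_le_totient_add_one (NonzeroIdeal.mem_primeFactors.mp hp)).trans
      (add_le_add_left hI 1)
  exact (totient_eq_partialTotient hsub).symm.trans_le hI

theorem totientCount_mono : Monotone (totientCount R) := fun _ y hxy ↦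
  Set.ncard_le_ncard (fun _ hI ↦ le_trans hI hxy) (finite_totient_le y)

theorem partialTotientCount_le_totientCount (S : Finset (HeightOneSpectrum R)) (x : ℝ) :
    partialTotientCount S x ≤ totientCount R x :=
  Set.ncard_le_ncard (fun I hI ↦ (totient_le_partialTotient S I).trans hI) (finite_totient_le x)

theorem ncard_totient_le_inter_dvd_le (p : HeightOneSpectrum R) (x : ℝ) :
    ({I : NonzeroIdeal R | (I.totient : ℝ) ≤ x} ∩ {I | p.asIdeal ∣ I.1}).ncard ≤
      totientCount R (x / (primeNorm p - 1)) := by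
  rw [← NonzeroIdeal.range_mulPrime, ← Set.image_preimage_eq_inter_range,
    Set.ncard_image_of_injective _ (NonzeroIdeal.mulPrime_injective p)]
  refine Set.ncard_le_ncard (fun I hI ↦ ?_) (finite_totient_le _)
  rw [Set.mem_ofPred_eq, le_div_iff₀' (by linarith [two_le_primeNorm p])]
  exact (primeNorm_sub_one_mul_totient_le p I).trans hI

open Classical in
theorem le_sum_inv_primeNorm_sub_one {S : Finset (HeightOneSpectrum R)} {I : NonzeroIdeal R}
    {x ε : ℝ} (hx : (I.totient : ℝ) ≤ x) (hS : Real.exp ε * x < partialTotient S I) :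
    ε ≤ ∑ p ∈ I.primeFactors with p ∉ S, (primeNorm p - 1)⁻¹ := by
  have hpos : 0 < x := one_pos.trans_le (I.one_le_totient.trans hx)
  have hlt := hS.trans_le ((partialTotient_le_totient_mul_exp S I).trans
    (mul_le_mul_of_nonneg_right hx (Real.exp_pos _).le))
  rw [mul_comm, mul_lt_mul_iff_right₀ hpos, Real.exp_lt_exp] at hlt
  exact hlt.le

theorem totientCount_le_partialTotientCount_add_ncard (S : Finset (HeightOneSpectrum R))
    (x y : ℝ) :
    totientCount R x ≤ partialTotientCount S y +
      {I : NonzeroIdeal R | (I.totient : ℝ) ≤ x ∧ y < partialTotient S I}.ncard := by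
  refine (Set.ncard_le_ncard (fun I hI ↦ ?_) ((finite_partialTotient_le S y).union
    ((finite_totient_le x).subset fun _ h ↦ h.1))).trans (Set.ncard_union_le _ _)
  exact (le_or_gt (partialTotient S I) y).imp id fun h ↦ ⟨hI, h⟩

open Classical in
theorem sum_sum_primeFactors_le (S : Finset (HeightOneSpectrum R)) {w : HeightOneSpectrum R → ℝ}
    (hw : ∀ p, 0 ≤ w p) {B : Finset (NonzeroIdeal R)} {x : ℝ}
    (hB : ∀ I ∈ B, (I.totient : ℝ) ≤ x) :
    ∑ I ∈ B, ∑ p ∈ I.primeFactors with p ∉ S, w p ≤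
      ∑ p ∈ (finite_primeNorm_le (x + 1)).toFinset with p ∉ S,
        w p * totientCount R (x / (primeNorm p - 1)) := by
  have hswap : ∑ I ∈ B, ∑ p ∈ I.primeFactors with p ∉ S, w p =
      ∑ p ∈ (finite_primeNorm_le (x + 1)).toFinset with p ∉ S,
        ∑ I ∈ B with p.asIdeal ∣ I.1, w p := by
    refine Finset.sum_comm' fun I p ↦ ?_
    have hp (hI : I ∈ B) (h : p.asIdeal ∣ I.1) : primeNorm p ≤ x + 1 :=
      (NonzeroIdeal.primeNorm_le_totient_add_one h).trans (add_le_add_left (hB I hI) 1)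
    simp only [Finset.mem_filter, Set.Finite.mem_toFinset, Set.mem_ofPred_eq,
      NonzeroIdeal.mem_primeFactors]
    tauto
  rw [hswap]
  refine Finset.sum_le_sum fun p _ ↦ ?_
  have hcard : {I ∈ B | p.asIdeal ∣ I.1}.card ≤ totientCount R (x / (primeNorm p - 1)) := by
    rw [← Set.ncard_coe_finset, Finset.coe_filter]
    refine le_trans (Set.ncard_le_ncard ?_ ((finite_totient_le x).inter_of_left _))
      (ncard_totient_le_inter_dvd_le p x)
    exact fun I hI ↦ ⟨hB I hI.1, hI.2⟩
  rw [Finset.sum_const, nsmul_eq_mul, mul_comm]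
  exact mul_le_mul_of_nonneg_left (Nat.cast_le.mpr hcard) (hw p)

open Classical in
-- Markov's inequality for the weight `∑ 1 / (N(p) - 1)` over the primes `p ∣ I` outside `S`,
-- which is at least `ε` as soon as `φ_S(I) > e^ε φ(I)`.
theorem mul_totientCount_le (S : Finset (HeightOneSpectrum R)) {ε : ℝ} (hε : 0 ≤ ε) (x : ℝ) :
    ε * totientCount R x ≤ ε * partialTotientCount S (Real.exp ε * x) +
      ∑ p ∈ (finite_primeNorm_le (x + 1)).toFinset with p ∉ S,
        (primeNorm p - 1)⁻¹ * totientCount R (x / (primeNorm p - 1)) := by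
  have hfin : {I : NonzeroIdeal R |
      (I.totient : ℝ) ≤ x ∧ Real.exp ε * x < partialTotient S I}.Finite :=
    (finite_totient_le x).subset fun _ h ↦ h.1
  have hmem {I : NonzeroIdeal R} (hI : I ∈ hfin.toFinset) := hfin.mem_toFinset.mp hI
  have hsplit := totientCount_le_partialTotientCount_add_ncard S x (Real.exp ε * x)
  rw [Set.ncard_eq_toFinset_card _ hfin] at hsplit
  have hw (p : HeightOneSpectrum R) : 0 ≤ (primeNorm p - 1)⁻¹ :=
    inv_nonneg.mpr (by linarith [two_le_primeNorm p])
  calc ε * totientCount R x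
      ≤ ε * partialTotientCount S (Real.exp ε * x) + ∑ _I ∈ hfin.toFinset, ε := by
        rw [Finset.sum_const, nsmul_eq_mul, mul_comm _ ε, ← mul_add]
        gcongr
        exact_mod_cast hsplit
    _ ≤ ε * partialTotientCount S (Real.exp ε * x) +
        ∑ I ∈ hfin.toFinset, ∑ p ∈ I.primeFactors with p ∉ S, (primeNorm p - 1)⁻¹ := by
        gcongr with I hI
        exact le_sum_inv_primeNorm_sub_one (hmem hI).1 (hmem hI).2
    _ ≤ _ := by
        gcongr
        exact sum_sum_primeFactors_le S hw fun I hI ↦ (hmem hI).1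

theorem mul_totientCount_le_of_forall_le (S : Finset (HeightOneSpectrum R)) {ε η : ℝ} (hε : 0 ≤ ε)
    (hη : ∀ T : Finset (HeightOneSpectrum R), Disjoint T S →
      ∑ p ∈ T, ((primeNorm p - 1)⁻¹) ^ 2 ≤ η)
    {x M : ℝ} (hx : 0 ≤ x) (hM : ∀ y, 0 ≤ y → y ≤ x → (totientCount R y : ℝ) ≤ M * y) :
    ε * totientCount R x ≤ ε * partialTotientCount S (Real.exp ε * x) + M * η * x := by
  classical
  have hMx : 0 ≤ M * x := (Nat.cast_nonneg _).trans (hM x hx le_rfl)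
  refine (mul_totientCount_le S hε x).trans (add_le_add_right ?_ _)
  calc _ ≤ ∑ p ∈ (finite_primeNorm_le (x + 1)).toFinset with p ∉ S,
        M * x * ((primeNorm p - 1)⁻¹) ^ 2 := by
        refine Finset.sum_le_sum fun p _ ↦ ?_
        have hq : 1 ≤ primeNorm p - 1 := by linarith [two_le_primeNorm p]
        calc _ ≤ (primeNorm p - 1)⁻¹ * (M * (x / (primeNorm p - 1))) := by
              gcongr
              exact hM _ (by positivity) (div_le_self hx hq)
          _ = _ := by field_simp
    _ ≤ M * η * x := by
      rw [← Finset.mul_sum, mul_right_comm M η x]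
      refine mul_le_mul_of_nonneg_left (hη _ ?_) hMx
      exact Finset.disjoint_left.mpr fun p hp ↦ (Finset.mem_filter.mp hp).2

theorem summable_inv_primeNorm_sub_one_sq
    (hs : Summable fun I : NonzeroIdeal R ↦ (I.norm : ℝ) ^ (-2 : ℝ)) :
    Summable fun p : HeightOneSpectrum R ↦ ((primeNorm p - 1)⁻¹) ^ 2 := by
  let toIdeal (p : HeightOneSpectrum R) : NonzeroIdeal R := ⟨p.asIdeal, p.ne_bot⟩
  have hinj : Function.Injective toIdeal := fun _ _ h ↦
    HeightOneSpectrum.ext (congrArg Subtype.val h)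
  refine ((hs.comp_injective hinj).mul_left 4).of_nonneg_of_le (fun p ↦ by positivity) fun p ↦ ?_
  have hq := two_le_primeNorm p
  have hpos : 0 < primeNorm p - 1 := by linarith
  calc ((primeNorm p - 1)⁻¹) ^ 2 ≤ ((primeNorm p / 2)⁻¹) ^ 2 := by gcongr; linarith
    _ = 4 * primeNorm p ^ (-2 : ℝ) := by
      rw [Real.rpow_neg (primeNorm_nonneg p), Real.rpow_two]
      field_simp
      norm_num

variable {κ : ℝ} (hκ : HasIdealDensity R κ)

include hκ

theorem HasIdealDensity.eventually_sum_inv_primeNorm_sub_one_sq_le {η : ℝ} (hη : 0 < η) :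
    ∀ᶠ S in atTop, ∀ T : Finset (HeightOneSpectrum R), Disjoint T S →
      ∑ p ∈ T, ((primeNorm p - 1)⁻¹) ^ 2 ≤ η := by
  obtain ⟨S₀, hS₀⟩ := (summable_inv_primeNorm_sub_one_sq
    (hκ.summable_norm_rpow one_lt_two)).vanishing (Iic_mem_nhds hη)
  filter_upwards [eventually_ge_atTop S₀] with S hS T hT
  exact hS₀ T (hT.mono_right hS)

theorem HasIdealDensity.exists_totientCount_le :
    ∃ c, ∀ x, 0 ≤ x → (totientCount R x : ℝ) ≤ c * x := by
  obtain ⟨S, hS⟩ := (hκ.eventually_sum_inv_primeNorm_sub_one_sq_le one_half_pos).exists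
  obtain ⟨c, hc⟩ := hκ.exists_partialTotientCount_le S
  refine ⟨2 * (c * Real.exp 1), fun x hx ↦ le_two_mul_of_forall_le_add_half
    (f := fun x ↦ (totientCount R x : ℝ)) (fun _ _ h ↦ Nat.cast_le.mpr (totientCount_mono h))
    (fun _ h ↦ by rw [totientCount_eq_zero h, Nat.cast_zero]) (fun M x hx hM ↦ ?_) hx⟩
  have hstep := mul_totientCount_le_of_forall_le S zero_le_one hS hx hM
  have hpartial := hc (Real.exp 1 * x) (by positivity)
  linarith

theorem HasIdealDensity.eventually_totientCount_le {ε η : ℝ} (hε : 0 < ε) (hη : 0 < η) :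
    ∀ᶠ S : Finset (HeightOneSpectrum R) in atTop, ∀ x, 0 ≤ x →
      (totientCount R x : ℝ) ≤ partialTotientCount S (Real.exp ε * x) + η * x := by
  obtain ⟨c, hc⟩ := hκ.exists_totientCount_le
  have hcpos : 0 < max c 1 := lt_max_of_lt_right one_pos
  filter_upwards [hκ.eventually_sum_inv_primeNorm_sub_one_sq_le
    (div_pos (mul_pos hε hη) hcpos)] with S hS x hx
  have hstep := mul_totientCount_le_of_forall_le S hε.le hS hx fun y hy _ ↦
    (hc y hy).trans (mul_le_mul_of_nonneg_right (le_max_left c 1) hy)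
  rw [mul_div_cancel₀ _ hcpos.ne', mul_assoc, ← mul_add] at hstep
  exact le_of_mul_le_mul_left hstep hε

theorem HasIdealDensity.tendsto_totientCount_div :
    Tendsto (fun x ↦ (totientCount R x : ℝ) / x) atTop
      (𝓝 (κ * (idealZeta R 2 * idealZeta R 3 / idealZeta R 6))) := by
  set C := idealZeta R 2 * idealZeta R 3 / idealZeta R 6
  have hdensity := (tendsto_partialTotientDensity fun s hs ↦ hκ.summable_norm_rpow hs).const_mul κ
  refine tendsto_order.mpr ⟨fun a ha ↦ ?_, fun a ha ↦ ?_⟩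
  · obtain ⟨S, hS⟩ := (hdensity.eventually_const_lt ha).exists
    filter_upwards [(hκ.tendsto_partialTotientCount_div S).eventually_const_lt hS,
      eventually_gt_atTop 0] with x hx hpos
    refine hx.trans_le ?_
    gcongr
    exact partialTotientCount_le_totientCount S x
  · obtain ⟨ε, d, hε, hd, hda⟩ : ∃ ε d, 0 < ε ∧ κ * C * Real.exp ε < d ∧ d < a := by
      obtain ⟨d, hd, hda⟩ := exists_between ha
      have hexp : Tendsto (fun ε ↦ κ * C * Real.exp ε) (𝓝[>] 0) (𝓝 (κ * C)) :=
        Continuous.tendsto' (by fun_prop) _ _ (by simp) |>.mono_left nhdsWithin_le_nhds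
      obtain ⟨ε, hε, hpos⟩ := ((hexp.eventually_lt_const hd).and self_mem_nhdsWithin).exists
      exact ⟨ε, d, hpos, hε, hda⟩
    obtain ⟨S, hS, hle⟩ := (((hdensity.mul_const (Real.exp ε)).eventually_lt_const hd).and
      (hκ.eventually_totientCount_le hε (sub_pos.mpr hda))).exists
    have hlim := tendsto_comp_div_const_div (hκ.tendsto_partialTotientCount_div S)
      (Real.exp_pos (-ε))
    rw [← Real.exp_neg, neg_neg] at hlim
    filter_upwards [hlim.eventually_lt_const hS, eventually_gt_atTop 0] with x hx hpos
    rw [Real.exp_neg, div_inv_eq_mul, mul_comm x, div_lt_iff₀ hpos] at hx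
    rw [div_lt_iff₀ hpos]
    linarith [hle x hpos.le]

end TotientCount

section RingOfIntegers

variable (K : Type*) [Field K] [NumberField K]

theorem hasIdealDensity_ringOfIntegers :
    HasIdealDensity (𝓞 K) (dedekindZeta_residue K) := by
  refine (NumberField.Ideal.tendsto_norm_le_div_atTop₀ K).congr fun x ↦ ?_
  let e : nonZeroDivisors (Ideal (𝓞 K)) ≃ NonzeroIdeal (𝓞 K) :=
    Equiv.subtypeEquivRight fun I ↦ by rw [mem_nonZeroDivisors_iff_ne_zero]; rfl
  rw [← Nat.card_coe_set_eq]
  exact congrArg (fun n : ℕ ↦ (n : ℝ) / x) (Nat.card_congr (e.subtypeEquiv fun _ ↦ Iff.rfl))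

theorem totientMultiplicity_eq_ncard (n : ℕ) :
    totientMultiplicity K n = {I : NonzeroIdeal (𝓞 K) | I.totient = n}.ncard :=
  (Nat.card_congr (Equiv.subtypeSubtypeEquivSubtypeInter (· ≠ ⊥)
    fun I : Ideal (𝓞 K) ↦ Nat.card (𝓞 K ⧸ I)ˣ = n)).symm

theorem sum_totientMultiplicity (N : ℕ) :
    ∑ n ∈ Finset.Icc 1 N, totientMultiplicity K n = totientCount (𝓞 K) N := by
  simp only [totientMultiplicity_eq_ncard, totientCount, Nat.cast_le]
  exact sum_ncard_fiber_eq_ncard_le NonzeroIdeal.totient_ne_zero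
    (fun n ↦ by simpa using finite_totient_le (R := 𝓞 K) n) N

theorem tsum_card_quotient_rpow (s : ℝ) :
    ∑' I : {I : Ideal (𝓞 K) // I ≠ ⊥}, (Nat.card (𝓞 K ⧸ I.1) : ℝ) ^ (-s) =
      idealZeta (𝓞 K) s :=
  rfl

end RingOfIntegers

end TotientMeanValue

open TotientMeanValue

/-- **Mean value of number field totients.**  Let `K` be a number field, `t_K` its totient
multiplicity function, and `ζ_K(σ) = ∑_I N(I)^{−σ}` (over nonzero ideals `I` of `𝓞 K`,
with `N(I) = #(𝓞 K / I)`).  If `ρ` is the residue of `ζ_K` at `σ = 1`, in the sense that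
`(σ−1)ζ_K(σ) → ρ` as `σ → 1⁺`, then
`(1/N) ∑_{n=1}^N t_K(n) → ρ · ζ_K(2) ζ_K(3) / ζ_K(6)` as `N → ∞`. -/
theorem numberField_totient_mean_value
    (K : Type*) [Field K] [NumberField K] (ρ : ℝ)
    (hρ : Filter.Tendsto
      (fun σ : ℝ => (σ - 1) *
        ∑' I : {I : Ideal (𝓞 K) // I ≠ ⊥}, (Nat.card (𝓞 K ⧸ I.1) : ℝ) ^ (-σ))
      (nhdsWithin 1 (Set.Ioi 1)) (nhds ρ)) :
    Filter.Tendsto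
      (fun N : ℕ => (1 / (N : ℝ)) * ∑ n ∈ Finset.Icc 1 N, (totientMultiplicity K n : ℝ))
      Filter.atTop
      (nhds (ρ *
        (∑' I : {I : Ideal (𝓞 K) // I ≠ ⊥}, (Nat.card (𝓞 K ⧸ I.1) : ℝ) ^ (-(2 : ℝ))) *
        (∑' I : {I : Ideal (𝓞 K) // I ≠ ⊥}, (Nat.card (𝓞 K ⧸ I.1) : ℝ) ^ (-(3 : ℝ))) /
        (∑' I : {I : Ideal (𝓞 K) // I ≠ ⊥}, (Nat.card (𝓞 K ⧸ I.1) : ℝ) ^ (-(6 : ℝ))))) := by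
  have hκ := hasIdealDensity_ringOfIntegers K
  simp only [tsum_card_quotient_rpow] at hρ ⊢
  obtain rfl := tendsto_nhds_unique hρ hκ.tendsto_sub_one_mul_idealZeta
  rw [mul_assoc, mul_div_assoc]
  refine (hκ.tendsto_totientCount_div.comp tendsto_natCast_atTop_atTop).congr fun N ↦ ?_
  rw [Function.comp_apply, ← sum_totientMultiplicity, Nat.cast_sum, one_div_mul_eq_div]
end

section
/- For a positive integer n let t(n) be the number of positive integers m with Euler totient φ(m) = n. Then the averages (1/N)·∑_{n=1}^{N} t(n) converge as N → ∞ to the real number ζ(2)·ζ(3)/ζ(6), where ζ is the Riemann zeta function; numerically this constant equals (∑_{k≥1} k^{−2})(∑_{k≥1} k^{−3})/(∑_{k≥1} k^{−6}). -/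
/-- The totient multiplicity `t(n)`: the number of positive integers `m` with
Euler totient `φ(m) = n`. -/
noncomputable def totientFiberCard (n : ℕ) : ℕ :=
  Nat.card {m : ℕ // 0 < m ∧ Nat.totient m = n}

/-! Since `m / φ(m) = ∑_{d ∣ m} μ²(d) / φ(d)`, the sum `∑_{n ≤ N} t(n)` counts the `m ≥ 1` with
`m ≤ N h(m)`, where `h` is the divisor sum of a nonnegative function `g`. If `g` has finite support,
then `h` is periodic and counting in residue classes gives the density `∑ g(d) / d`. In general,
`lcm(d, e) ≥ √d √e` bounds the second moment of `h(m) / m`, and Chebyshev's inequality shows that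
at most `3 x ∑ g(d) / √d` integers satisfy `m ≤ x h(m)`; applied to the tail of `g`, this makes
truncation harmless. The resulting constant `∑ μ²(d) / (d φ(d))` has the Euler product
`∏ (1 + 1 / (p (p - 1)))`, which is that of `ζ(2) ζ(3) / ζ(6)`. -/

section

open Filter Finset Topology

/-- The set of `m ≥ 1` with `m ≤ x h(m)`, where `h(m) = ∑_{d ∣ m} g(d)`. For
`g(d) = μ²(d)/φ(d)` one has `h(m) = m/φ(m)`, so the condition on `m` reads `φ(m) ≤ x`. -/
def divisorSumSublevel (g : ℕ → ℝ) (x : ℝ) : Set ℕ :=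
  {m | 0 < m ∧ (m : ℝ) ≤ x * ∑ d ∈ m.divisors, g d}

lemma divisorSumSublevel_mono {g₁ g₂ : ℕ → ℝ} (h : ∀ d, g₁ d ≤ g₂ d) {x : ℝ} (hx : 0 ≤ x) :
    divisorSumSublevel g₁ x ⊆ divisorSumSublevel g₂ x := fun _ ⟨hm, hle⟩ =>
  ⟨hm, hle.trans <| mul_le_mul_of_nonneg_left (sum_le_sum fun d _ => h d) hx⟩

lemma divisorSumSublevel_add_subset (g₁ g₂ : ℕ → ℝ) (x : ℝ) {ε : ℝ} (hε : 0 < ε) (hε1 : ε < 1) :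
    divisorSumSublevel (g₁ + g₂) x ⊆
      divisorSumSublevel g₁ (x / (1 - ε)) ∪ divisorSumSublevel g₂ (x / ε) := by
  rintro m ⟨hm, hle⟩
  by_contra hnot
  have h₁ : x / (1 - ε) * ∑ d ∈ m.divisors, g₁ d < m :=
    not_le.1 fun h => hnot (Or.inl ⟨hm, h⟩)
  have h₂ : x / ε * ∑ d ∈ m.divisors, g₂ d < m := not_le.1 fun h => hnot (Or.inr ⟨hm, h⟩)
  rw [div_mul_eq_mul_div, div_lt_iff₀ (by linarith)] at h₁
  rw [div_mul_eq_mul_div, div_lt_iff₀ hε] at h₂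
  simp only [Pi.add_apply, sum_add_distrib, mul_add] at hle
  linarith

lemma sum_inv_sq_le_of_forall_dvd {l N : ℕ} (hl : 0 < l) {s : Finset ℕ}
    (hs : ∀ m ∈ s, N < m ∧ l ∣ m) : ∑ m ∈ s, ((m : ℝ) ^ 2)⁻¹ ≤ 2 / ((N + 1) * l) := by
  have hsub : s ⊆ (Ioo (N / l) (s.sup id + 1)).image (l * ·) := by
    intro m hm
    obtain ⟨hNm, j, rfl⟩ := hs m hm
    refine mem_image.2 ⟨j, mem_Ioo.2 ⟨(Nat.div_lt_iff_lt_mul hl).2 (mul_comm l j ▸ hNm), ?_⟩, rfl⟩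
    exact Nat.lt_succ_of_le ((Nat.le_mul_of_pos_left j hl).trans (le_sup (f := id) hm))
  have hN : (N + 1 : ℝ) ≤ l * ((N / l : ℕ) + 1) := by
    exact_mod_cast Nat.lt_mul_div_succ N hl
  calc ∑ m ∈ s, ((m : ℝ) ^ 2)⁻¹
      ≤ ∑ m ∈ (Ioo (N / l) (s.sup id + 1)).image (l * ·), ((m : ℝ) ^ 2)⁻¹ :=
        sum_le_sum_of_subset_of_nonneg hsub fun _ _ _ => by positivity
    _ = ∑ j ∈ Ioo (N / l) (s.sup id + 1), ((l : ℝ) ^ 2)⁻¹ * ((j : ℝ) ^ 2)⁻¹ := by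
        rw [sum_image fun a _ b _ h => Nat.eq_of_mul_eq_mul_left hl h]
        simp only [Nat.cast_mul, mul_pow, mul_inv]
    _ ≤ ((l : ℝ) ^ 2)⁻¹ * (2 / ((N / l : ℕ) + 1)) := by
        rw [← mul_sum]
        exact mul_le_mul_of_nonneg_left (sum_Ioo_inv_sq_le _ _) (by positivity)
    _ = 2 / (l * ((N / l : ℕ) + 1) * l) := by field_simp
    _ ≤ 2 / ((N + 1) * l) := by gcongr

lemma sqrt_mul_sqrt_le_lcm (d e : ℕ) : √(d : ℝ) * √(e : ℝ) ≤ d.lcm e := by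
  rw [← Real.sqrt_mul d.cast_nonneg, Real.sqrt_le_left (Nat.cast_nonneg _), sq]
  rcases (d.lcm e).eq_zero_or_pos with h | h
  · rcases Nat.lcm_eq_zero_iff.1 h with rfl | rfl <;> simp
  · have hd := Nat.le_of_dvd h (Nat.dvd_lcm_left d e)
    have he := Nat.le_of_dvd h (Nat.dvd_lcm_right d e)
    gcongr

lemma sum_inv_sq_filter_dvd_dvd_le {d e N : ℕ} (hd : 0 < d) (he : 0 < e) {s : Finset ℕ}
    (hs : ∀ m ∈ s, N < m) :
    ∑ m ∈ s with d ∣ m ∧ e ∣ m, ((m : ℝ) ^ 2)⁻¹ ≤ 2 / (N + 1) * ((√d)⁻¹ * (√e)⁻¹) := by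
  have hlcm : ∀ m ∈ s.filter fun m => d ∣ m ∧ e ∣ m, N < m ∧ d.lcm e ∣ m := fun m hm =>
    have ⟨hms, hdm, hem⟩ := mem_filter.1 hm
    ⟨hs m hms, Nat.lcm_dvd hdm hem⟩
  calc ∑ m ∈ s with d ∣ m ∧ e ∣ m, ((m : ℝ) ^ 2)⁻¹
      ≤ 2 / ((N + 1) * d.lcm e) := sum_inv_sq_le_of_forall_dvd (Nat.lcm_pos hd he) hlcm
    _ ≤ 2 / ((N + 1) * (√d * √e)) := by
        gcongr
        exact sqrt_mul_sqrt_le_lcm d e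
    _ = 2 / (N + 1) * ((√d)⁻¹ * (√e)⁻¹) := by rw [← div_div, div_eq_mul_inv, mul_inv]

section SecondMoment

variable {g : ℕ → ℝ} (hg : ∀ d, 0 ≤ g d) (hsum : Summable fun d => g d / √(d : ℝ))

include hg hsum

lemma sum_sq_sum_divisors_div_sq_le {N : ℕ} {s : Finset ℕ} (hs : ∀ m ∈ s, N < m) :
    ∑ m ∈ s, (∑ d ∈ m.divisors, g d) ^ 2 / (m : ℝ) ^ 2 ≤
      2 / (N + 1) * (∑' d, g d / √(d : ℝ)) ^ 2 := by
  set D := s.biUnion Nat.divisors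
  have hDpos : ∀ d ∈ D, 0 < d := fun d hd => by
    obtain ⟨m, -, hdm⟩ := mem_biUnion.1 hd
    exact Nat.pos_of_mem_divisors hdm
  have hdiv : ∀ m ∈ s, m.divisors = D.filter (· ∣ m) := fun m hm => by
    ext d
    simp only [D, mem_filter, mem_biUnion, Nat.mem_divisors]
    exact ⟨fun h => ⟨⟨m, hm, h⟩, h.1⟩, fun h => ⟨h.2, (Nat.zero_lt_of_lt (hs m hm)).ne'⟩⟩
  have hexpand : ∀ m ∈ s, (∑ d ∈ m.divisors, g d) ^ 2 / (m : ℝ) ^ 2 =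
      ∑ d ∈ D, ∑ e ∈ D, if d ∣ m ∧ e ∣ m then g d * g e * ((m : ℝ) ^ 2)⁻¹ else 0 := fun m hm => by
    rw [hdiv m hm, div_eq_mul_inv, sq, sum_mul_sum, sum_filter, sum_mul]
    refine sum_congr rfl fun d _ => ?_
    by_cases hd : d ∣ m <;> simp [hd, sum_filter, sum_mul]
  calc ∑ m ∈ s, (∑ d ∈ m.divisors, g d) ^ 2 / (m : ℝ) ^ 2
      = ∑ d ∈ D, ∑ e ∈ D, g d * g e * ∑ m ∈ s with d ∣ m ∧ e ∣ m, ((m : ℝ) ^ 2)⁻¹ := by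
        rw [sum_congr rfl hexpand, sum_comm]
        refine sum_congr rfl fun d _ => ?_
        rw [sum_comm]
        exact sum_congr rfl fun e _ => by rw [← sum_filter, mul_sum]
    _ ≤ ∑ d ∈ D, ∑ e ∈ D, g d * g e * (2 / (N + 1) * ((√d)⁻¹ * (√e)⁻¹)) :=
        sum_le_sum fun d hd => sum_le_sum fun e he => mul_le_mul_of_nonneg_left
          (sum_inv_sq_filter_dvd_dvd_le (hDpos d hd) (hDpos e he) hs) (mul_nonneg (hg d) (hg e))
    _ = 2 / (N + 1) * (∑ d ∈ D, g d / √d) ^ 2 := by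
        rw [sq, sum_mul_sum, mul_sum]
        refine sum_congr rfl fun d _ => ?_
        rw [mul_sum]
        exact sum_congr rfl fun e _ => by ring
    _ ≤ 2 / (N + 1) * (∑' d, g d / √(d : ℝ)) ^ 2 := by
        have hterm : ∀ d, 0 ≤ g d / √(d : ℝ) := fun d => div_nonneg (hg d) (Real.sqrt_nonneg _)
        gcongr
        · exact sum_nonneg fun d _ => hterm d
        · exact hsum.sum_le_tsum D fun d _ => hterm d

lemma card_le_of_subset_divisorSumSublevel {x : ℝ} (hx : 0 ≤ x) {s : Finset ℕ}
    (hs : ↑s ⊆ divisorSumSublevel g x) : (#s : ℝ) ≤ 3 * x * ∑' d, g d / √(d : ℝ) := by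
  set T := ∑' d, g d / √(d : ℝ)
  have hT : 0 ≤ T := tsum_nonneg fun d => div_nonneg (hg d) (Real.sqrt_nonneg _)
  set N := ⌊x * T⌋₊
  have hsmall : (#{m ∈ s | m ≤ N} : ℝ) ≤ x * T := by
    have hsub : {m ∈ s | m ≤ N} ⊆ Ioc 0 N := fun m hm =>
      have ⟨hms, hmN⟩ := mem_filter.1 hm
      mem_Ioc.2 ⟨(hs hms).1, hmN⟩
    calc (#{m ∈ s | m ≤ N} : ℝ) ≤ N := by exact_mod_cast (card_le_card hsub).trans (by simp)
      _ ≤ x * T := Nat.floor_le (mul_nonneg hx hT)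
  -- Chebyshev: every `m` counted here has `1 ≤ (x h(m) / m)²`.
  have hlarge : (#{m ∈ s | ¬ m ≤ N} : ℝ) ≤ 2 * (x * T) := by
    calc (#{m ∈ s | ¬ m ≤ N} : ℝ) = ∑ m ∈ s with ¬ m ≤ N, (1 : ℝ) := by simp
      _ ≤ ∑ m ∈ s with ¬ m ≤ N, x ^ 2 * ((∑ d ∈ m.divisors, g d) ^ 2 / (m : ℝ) ^ 2) := by
          refine sum_le_sum fun m hm => ?_
          obtain ⟨hm0, hle⟩ := hs (mem_filter.1 hm).1
          have hmpos : (0 : ℝ) < m := Nat.cast_pos.2 hm0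
          rw [← mul_div_assoc, ← mul_pow, one_le_div (pow_pos hmpos 2)]
          gcongr
      _ ≤ x ^ 2 * (2 / (N + 1) * T ^ 2) := by
          rw [← mul_sum]
          refine mul_le_mul_of_nonneg_left ?_ (sq_nonneg x)
          exact sum_sq_sum_divisors_div_sq_le hg hsum fun m hm => not_le.1 (mem_filter.1 hm).2
      _ = 2 * (x * T) * (x * T / (N + 1)) := by ring
      _ ≤ 2 * (x * T) := by
          refine mul_le_of_le_one_right (by positivity) ?_
          exact (div_le_one (by positivity)).2 (Nat.lt_floor_add_one _).le
  calc (#s : ℝ) = #{m ∈ s | m ≤ N} + #{m ∈ s | ¬ m ≤ N} := by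
        exact_mod_cast (card_filter_add_card_filter_not (s := s) (· ≤ N)).symm
    _ ≤ 3 * x * T := by linarith

lemma finite_divisorSumSublevel {x : ℝ} (hx : 0 ≤ x) : (divisorSumSublevel g x).Finite := by
  by_contra hinf
  obtain ⟨n, hn⟩ := exists_nat_gt (3 * x * ∑' d, g d / √(d : ℝ))
  obtain ⟨s, hs, rfl⟩ := Set.Infinite.exists_subset_card_eq hinf n
  exact hn.not_ge (card_le_of_subset_divisorSumSublevel hg hsum hx hs)

lemma ncard_divisorSumSublevel_le {x : ℝ} (hx : 0 ≤ x) :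
    ((divisorSumSublevel g x).ncard : ℝ) ≤ 3 * x * ∑' d, g d / √(d : ℝ) := by
  have hfin := finite_divisorSumSublevel hg hsum hx
  rw [Set.ncard_eq_toFinset_card _ hfin]
  exact card_le_of_subset_divisorSumSublevel hg hsum hx hfin.coe_toFinset.le

end SecondMoment

lemma abs_card_Ioc_filter_modEq_sub_le {P : ℕ} (hP : 0 < P) (r n : ℕ) :
    |(#{m ∈ Ioc 0 n | m ≡ r [MOD P]} : ℝ) - n / P| ≤ 1 := by
  have hcard := Nat.Ioc_filter_modEq_card 0 n hP r
  set u : ℚ := (n - r) / P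
  set v : ℚ := ((0 : ℕ) - r) / P
  have huv : u - v = n / P := by simp only [u, v]; ring
  have hvu : v ≤ u := sub_nonneg.1 (huv ▸ by positivity)
  rw [max_eq_left (sub_nonneg.2 (Int.floor_le_floor hvu))] at hcard
  have hcard' : (#{m ∈ Ioc 0 n | m ≡ r [MOD P]} : ℚ) = ⌊u⌋ - ⌊v⌋ := by exact_mod_cast hcard
  have hrat : |(#{m ∈ Ioc 0 n | m ≡ r [MOD P]} : ℚ) - n / P| ≤ 1 := by
    rw [hcard', ← huv, abs_le]
    constructor <;>
      linarith [Int.floor_le u, Int.lt_floor_add_one u, Int.floor_le v, Int.lt_floor_add_one v]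
  have hreal := (Rat.cast_le (K := ℝ)).2 hrat
  push_cast at hreal
  exact hreal

lemma tendsto_card_Ioc_floor_filter_modEq_div {P : ℕ} (hP : 0 < P) (r : ℕ) {c : ℝ} (hc : 0 ≤ c) :
    Tendsto (fun x : ℝ => (#{m ∈ Ioc 0 ⌊c * x⌋₊ | m ≡ r [MOD P]} : ℝ) / x) atTop (𝓝 (c / P)) := by
  have hfloor := (tendsto_nat_floor_mul_div_atTop hc).div_const (P : ℝ)
  refine hfloor.congr_dist (squeeze_zero' (.of_forall fun _ => dist_nonneg) ?_
    tendsto_inv_atTop_zero)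
  filter_upwards [eventually_gt_atTop 0] with x hx
  rw [dist_comm, Real.dist_eq, div_right_comm, ← sub_div, abs_div, abs_of_pos hx, inv_eq_one_div]
  gcongr
  exact abs_card_Ioc_filter_modEq_sub_le hP r _

lemma tendsto_ncard_le_mul_div_of_periodic {h : ℕ → ℝ} {P : ℕ} (hP : 0 < P)
    (hper : Function.Periodic h P) (hnonneg : ∀ m, 0 ≤ h m) :
    Tendsto (fun x : ℝ => ({m : ℕ | 0 < m ∧ (m : ℝ) ≤ x * h m}.ncard : ℝ) / x) atTop
      (𝓝 ((∑ r ∈ range P, h r) / P)) := by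
  have hsplit : ∀ x : ℝ, 0 ≤ x → {m : ℕ | 0 < m ∧ (m : ℝ) ≤ x * h m} =
      (range P).biUnion fun r => {m ∈ Ioc 0 ⌊h r * x⌋₊ | m ≡ r [MOD P]} := fun x hx => by
    ext m
    have hmod : ∀ r < P, m ≡ r [MOD P] ↔ m % P = r := fun r hr => by
      rw [Nat.ModEq, Nat.mod_eq_of_lt hr]
    have hfloor : m ≤ ⌊h (m % P) * x⌋₊ ↔ (m : ℝ) ≤ x * h m := by
      rw [Nat.le_floor_iff (mul_nonneg (hnonneg _) hx), hper.map_mod_nat, mul_comm]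
    simp only [Set.mem_ofPred_eq, coe_biUnion, Set.mem_iUnion, mem_coe, mem_filter, mem_Ioc,
      mem_range]
    constructor
    · rintro ⟨hm, hle⟩
      exact ⟨m % P, Nat.mod_lt m hP, ⟨hm, hfloor.2 hle⟩, (m.mod_modEq P).symm⟩
    · rintro ⟨r, hr, ⟨hm, hle⟩, hmr⟩
      obtain rfl := (hmod r hr).1 hmr
      exact ⟨hm, hfloor.1 hle⟩
  have hdisj : ∀ x : ℝ, (range P : Set ℕ).PairwiseDisjoint
      fun r => {m ∈ Ioc 0 ⌊h r * x⌋₊ | m ≡ r [MOD P]} := fun x r hr r' hr' hne =>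
    disjoint_left.2 fun m hm hm' => hne <| Nat.ModEq.eq_of_lt_of_lt
      ((mem_filter.1 hm).2.symm.trans (mem_filter.1 hm').2) (mem_range.1 hr) (mem_range.1 hr')
  rw [sum_div]
  refine (tendsto_finsetSum _ fun r _ =>
    tendsto_card_Ioc_floor_filter_modEq_div hP r (hnonneg r)).congr' ?_
  filter_upwards [eventually_ge_atTop 0] with x hx
  rw [hsplit x hx, Set.ncard_coe_finset, card_biUnion (hdisj x), Nat.cast_sum, sum_div]

lemma sum_range_sum_filter_dvd_div (g : ℕ → ℝ) {s : Finset ℕ} {P : ℕ} (hP : 0 < P)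
    (hs : ∀ d ∈ s, d ∣ P) :
    (∑ r ∈ range P, ∑ d ∈ s with d ∣ r, g d) / P = ∑ d ∈ s, g d / d := by
  simp_rw [sum_filter]
  rw [sum_comm, sum_div]
  refine sum_congr rfl fun d hd => ?_
  have hd0 : 0 < d := Nat.pos_of_dvd_of_pos (hs d hd) hP
  have hcount : #{r ∈ range P | d ∣ r} = P / d := by
    simpa [Nat.modEq_zero_iff_dvd, Nat.count_eq_card_filter_range, Nat.mod_eq_zero_of_dvd (hs d hd)]
      using Nat.count_modEq_card P hd0 0
  rw [← sum_filter, sum_const, hcount, nsmul_eq_mul, Nat.cast_div (hs d hd) (by positivity)]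
  field_simp

lemma tendsto_ncard_divisorSumSublevel_indicator_div {g : ℕ → ℝ} (hg : ∀ d, 0 ≤ g d)
    (s : Finset ℕ) :
    Tendsto (fun x : ℝ => ((divisorSumSublevel ((s : Set ℕ).indicator g) x).ncard : ℝ) / x) atTop
      (𝓝 (∑ d ∈ s, g d / d)) := by
  set P := ∏ d ∈ s.erase 0, d
  have hP : 0 < P := prod_pos fun d hd => Nat.pos_of_ne_zero (ne_of_mem_erase hd)
  have hdvd : ∀ d ∈ s.erase 0, d ∣ P := fun d hd => dvd_prod_of_mem id hd
  have hper : Function.Periodic (fun m => ∑ d ∈ s.erase 0 with d ∣ m, g d) P := fun m => by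
    refine congrArg (fun t => ∑ d ∈ t, g d) (filter_congr fun d hd => ?_)
    exact (Nat.dvd_add_iff_left (hdvd d hd)).symm
  have hset : ∀ x : ℝ, divisorSumSublevel ((s : Set ℕ).indicator g) x =
      {m : ℕ | 0 < m ∧ (m : ℝ) ≤ x * ∑ d ∈ s.erase 0 with d ∣ m, g d} := fun x => by
    ext m
    refine and_congr_right fun hm => ?_
    have hfilter : {d ∈ s.erase 0 | d ∣ m} = {d ∈ m.divisors | d ∈ (s : Set ℕ)} := by
      ext d
      have hm0 : m ≠ 0 := hm.ne'
      have hd0 : d ∣ m → d ≠ 0 := ne_zero_of_dvd_ne_zero hm0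
      simp only [mem_filter, mem_erase, Nat.mem_divisors, mem_coe]
      tauto
    rw [hfilter, sum_filter]
    simp only [Set.indicator_apply]
  have hlim := tendsto_ncard_le_mul_div_of_periodic hP hper fun m => sum_nonneg fun d _ => hg d
  rw [sum_range_sum_filter_dvd_div g hP hdvd, sum_erase _ (by simp)] at hlim
  simpa only [hset] using hlim

lemma summable_indicator_div {ι : Type*} {g w : ι → ℝ} (hsum : Summable fun d => g d / w d)
    (s : Set ι) :
    Summable fun d => s.indicator g d / w d :=
  (hsum.indicator s).congr fun d => by by_cases hd : d ∈ s <;> simp [hd]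

lemma tendsto_tsum_indicator_compl_div {ι : Type*} (g w : ι → ℝ) :
    Tendsto (fun s : Finset ι => ∑' d, (s : Set ι)ᶜ.indicator g d / w d) atTop (𝓝 0) := by
  refine (tendsto_tsum_compl_atTop_zero fun d => g d / w d).congr fun s => ?_
  refine (tsum_subtype (s : Set ι)ᶜ fun d => g d / w d).trans (tsum_congr fun d => ?_)
  by_cases hd : d ∈ s <;> simp [hd]

section Truncation

variable {g : ℕ → ℝ} (hg : ∀ d, 0 ≤ g d) (hsum : Summable fun d => g d / √(d : ℝ))

include hg hsum

lemma summable_div_natCast : Summable fun d : ℕ => g d / d := by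
  refine hsum.of_nonneg_of_le (fun d => div_nonneg (hg d) d.cast_nonneg) fun d => ?_
  rcases d.eq_zero_or_pos with rfl | hd
  · simp
  · have hd1 : (1 : ℝ) ≤ d := Nat.one_le_cast.2 hd
    have := hg d
    gcongr
    exact Real.sqrt_le_self_iff.2 (Or.inr hd1)

lemma eventually_lt_ncard_divisorSumSublevel_div {a : ℝ} (ha : a < ∑' d, g d / (d : ℝ)) :
    ∀ᶠ x : ℝ in atTop, a < (divisorSumSublevel g x).ncard / x := by
  obtain ⟨s, hs⟩ :=
    ((summable_div_natCast hg hsum).hasSum.eventually_const_lt ha).exists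
  filter_upwards [(tendsto_ncard_divisorSumSublevel_indicator_div hg s).eventually_const_lt hs,
    eventually_ge_atTop 0] with x hlt hx
  refine hlt.trans_le ?_
  gcongr
  · exact finite_divisorSumSublevel hg hsum hx
  · exact divisorSumSublevel_mono (Set.indicator_le_self' fun d _ => hg d) hx

lemma ncard_divisorSumSublevel_le_add (s : Set ℕ) {x ε : ℝ} (hx : 0 ≤ x) (hε : 0 < ε)
    (hε1 : ε < 1) :
    ((divisorSumSublevel g x).ncard : ℝ) ≤
      (divisorSumSublevel (s.indicator g) (x / (1 - ε))).ncard +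
        3 * (x / ε) * ∑' d, sᶜ.indicator g d / √(d : ℝ) := by
  have hnonneg : ∀ (u : Set ℕ) d, 0 ≤ u.indicator g d := fun u d =>
    Set.indicator_nonneg (fun d _ => hg d) d
  have hfin : ∀ (u : Set ℕ) {y : ℝ}, 0 ≤ y → (divisorSumSublevel (u.indicator g) y).Finite :=
    fun u _ hy => finite_divisorSumSublevel (hnonneg u) (summable_indicator_div hsum u) hy
  have hx₁ : 0 ≤ x / (1 - ε) := div_nonneg hx (sub_nonneg.2 hε1.le)
  have hx₂ : 0 ≤ x / ε := div_nonneg hx hε.le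
  have hcover := divisorSumSublevel_add_subset (s.indicator g) (sᶜ.indicator g) x hε hε1
  rw [Set.indicator_self_add_compl] at hcover
  calc ((divisorSumSublevel g x).ncard : ℝ)
      ≤ (divisorSumSublevel (s.indicator g) (x / (1 - ε))).ncard +
          (divisorSumSublevel (sᶜ.indicator g) (x / ε)).ncard := by
        exact_mod_cast (Set.ncard_le_ncard hcover ((hfin s hx₁).union (hfin sᶜ hx₂))).trans
          (Set.ncard_union_le _ _)
    _ ≤ _ := by
        gcongr
        exact ncard_divisorSumSublevel_le (hnonneg sᶜ) (summable_indicator_div hsum sᶜ) hx₂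

lemma eventually_ncard_divisorSumSublevel_div_lt {b : ℝ} (hb : ∑' d, g d / (d : ℝ) < b) :
    ∀ᶠ x : ℝ in atTop, (divisorSumSublevel g x).ncard / x < b := by
  -- First `ε` makes the loss `1 / (1 - ε)` harmless, then `s` makes the tail small next to `ε`.
  have hε : Tendsto (fun ε : ℝ => (∑' d, g d / (d : ℝ)) / (1 - ε)) (𝓝[>] 0)
      (𝓝 (∑' d, g d / (d : ℝ))) := by
    have hcont : ContinuousAt (fun ε : ℝ => (∑' d, g d / (d : ℝ)) / (1 - ε)) 0 := by
      fun_prop (disch := norm_num)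
    simpa using hcont.tendsto.mono_left nhdsWithin_le_nhds
  obtain ⟨ε, hεb, hε0, hε1⟩ :=
    ((hε.eventually_lt_const hb).and (Ioo_mem_nhdsGT one_pos)).exists
  have hs : Tendsto (fun s : Finset ℕ => (∑ d ∈ s, g d / (d : ℝ)) / (1 - ε) +
      3 / ε * ∑' d, (s : Set ℕ)ᶜ.indicator g d / √(d : ℝ)) atTop
      (𝓝 ((∑' d, g d / (d : ℝ)) / (1 - ε) + 3 / ε * 0)) :=
    Tendsto.add (Tendsto.div_const (summable_div_natCast hg hsum).hasSum _)
      ((tendsto_tsum_indicator_compl_div g _).const_mul _)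
  rw [mul_zero, add_zero] at hs
  obtain ⟨s, hsb⟩ := (hs.eventually_lt_const hεb).exists
  have hmain : Tendsto (fun x : ℝ =>
      ((divisorSumSublevel ((s : Set ℕ).indicator g) (x / (1 - ε))).ncard : ℝ) / (x / (1 - ε)) /
        (1 - ε) + 3 / ε * ∑' d, (s : Set ℕ)ᶜ.indicator g d / √(d : ℝ)) atTop
      (𝓝 ((∑ d ∈ s, g d / (d : ℝ)) / (1 - ε) +
        3 / ε * ∑' d, (s : Set ℕ)ᶜ.indicator g d / √(d : ℝ))) :=
    (((tendsto_ncard_divisorSumSublevel_indicator_div hg s).comp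
      (tendsto_id.atTop_div_const (sub_pos.2 hε1))).div_const _).add_const _
  filter_upwards [hmain.eventually_lt_const hsb, eventually_gt_atTop 0] with x hlt hx
  refine lt_of_le_of_lt ?_ hlt
  rw [div_le_iff₀ hx]
  have hne : 1 - ε ≠ 0 := (sub_pos.2 hε1).ne'
  refine (ncard_divisorSumSublevel_le_add hg hsum s hx.le hε0 hε1).trans_eq ?_
  field_simp

theorem tendsto_ncard_divisorSumSublevel_div :
    Tendsto (fun x : ℝ => ((divisorSumSublevel g x).ncard : ℝ) / x) atTop
      (𝓝 (∑' d, g d / (d : ℝ))) :=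
  tendsto_order.2 ⟨fun _ => eventually_lt_ncard_divisorSumSublevel_div hg hsum,
    fun _ => eventually_ncard_divisorSumSublevel_div_lt hg hsum⟩

end Truncation

lemma prime_dvd_prod_primes_iff {p : Nat.Primes} {t : Finset Nat.Primes} :
    (p : ℕ) ∣ ∏ q ∈ t, (q : ℕ) ↔ p ∈ t := by
  rw [p.2.prime.dvd_finsetProd_iff]
  constructor
  · rintro ⟨q, hq, hpq⟩
    exact Nat.Primes.coe_nat_injective ((Nat.prime_dvd_prime_iff_eq p.2 q.2).1 hpq) ▸ hq
  · exact fun hp => ⟨p, hp, dvd_rfl⟩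

lemma injective_prod_primes : Function.Injective fun t : Finset Nat.Primes => ∏ p ∈ t, (p : ℕ) :=
  fun t u (htu : ∏ p ∈ t, (p : ℕ) = ∏ p ∈ u, (p : ℕ)) => by
    ext p
    rw [← prime_dvd_prod_primes_iff, htu, prime_dvd_prod_primes_iff]

lemma exists_prod_primes_eq_of_squarefree {n : ℕ} (hn : Squarefree n) :
    ∃ t : Finset Nat.Primes, ∏ p ∈ t, (p : ℕ) = n :=
  ⟨n.primeFactors.subtype Nat.Prime,
    (prod_subtype_of_mem (fun p => p) fun _ => Nat.prime_of_mem_primeFactors).trans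
      (Nat.prod_primeFactors_of_squarefree hn)⟩

section SquarefreeSupport

variable {R : Type*} [CommSemiring R] {F : ArithmeticFunction R} (hF : F.IsMultiplicative)
  (hsupp : ∀ n, ¬ Squarefree n → F n = 0)

include hF hsupp

lemma sum_divisors_eq_prod_primeFactors_one_add {n : ℕ} (hn : n ≠ 0) :
    ∑ d ∈ n.divisors, F d = ∏ p ∈ n.primeFactors, (1 + F p) := by
  rw [← Nat.primeFactors_radical, hF.prodPrimeFactors_one_add_of_squarefree
    UniqueFactorizationMonoid.squarefree_radical]
  refine (sum_subset (Nat.divisors_subset_of_dvd hn UniqueFactorizationMonoid.radical_dvd_self)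
    fun d hd hnot => hsupp d fun hsq => hnot ?_).symm
  exact Nat.mem_divisors.2 ⟨(UniqueFactorizationMonoid.dvd_radical_iff hsq.isRadical hn).2
    (Nat.dvd_of_mem_divisors hd), UniqueFactorizationMonoid.radical_ne_zero⟩

variable [TopologicalSpace R]

lemma hasSum_prod_primes_iff {a : R} :
    HasSum (fun t : Finset Nat.Primes => ∏ p ∈ t, F p) a ↔ HasSum F a := by
  have hprod : (fun t : Finset Nat.Primes => ∏ p ∈ t, F p) =
      F ∘ fun t : Finset Nat.Primes => ∏ p ∈ t, (p : ℕ) :=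
    funext fun t => (hF.map_prod _ t fun p _ q _ hpq =>
      (Nat.coprime_primes p.2 q.2).2 (Nat.Primes.coe_nat_injective.ne hpq)).symm
  rw [hprod]
  exact injective_prod_primes.hasSum_iff fun n hn =>
    hsupp n fun hsq => hn (exists_prod_primes_eq_of_squarefree hsq)

lemma hasProd_one_add_primes (hsum : Summable F) :
    HasProd (fun p : Nat.Primes => 1 + F p) (∑' n, F n) :=
  hasProd_one_add_of_hasSum_prod ((hasSum_prod_primes_iff hF hsupp).2 hsum.hasSum)

end SquarefreeSupport

lemma summable_of_summable_norm_primes {R : Type*} [NormedCommRing R] [NormOneClass R]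
    [CompleteSpace R] {F : ArithmeticFunction R} (hF : F.IsMultiplicative)
    (hsupp : ∀ n, ¬ Squarefree n → F n = 0) (hprimes : Summable fun p : Nat.Primes => ‖F p‖) :
    Summable F :=
  have ⟨a, ha⟩ := summable_finsetProd_of_summable_norm hprimes
  ⟨a, (hasSum_prod_primes_iff hF hsupp).1 ha⟩

/-- The arithmetic function `d ↦ μ²(d) / (φ(d) d^σ)`. For `σ = 0` its divisor sum at `m` is
`m / φ(m)`; dividing by `√d` and by `d` gives the cases `σ = 1/2` and `σ = 1`. -/
noncomputable def sqfreeInvTotient (σ : ℝ) : ArithmeticFunction ℝ where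
  toFun d := if Squarefree d then (d.totient * (d : ℝ) ^ σ)⁻¹ else 0
  map_zero' := if_neg not_squarefree_zero

lemma sqfreeInvTotient_apply (σ : ℝ) (d : ℕ) :
    sqfreeInvTotient σ d = if Squarefree d then (d.totient * (d : ℝ) ^ σ)⁻¹ else 0 := rfl

lemma sqfreeInvTotient_of_not_squarefree (σ : ℝ) (d : ℕ) (hd : ¬ Squarefree d) :
    sqfreeInvTotient σ d = 0 := if_neg hd

lemma sqfreeInvTotient_prime (σ : ℝ) {p : ℕ} (hp : p.Prime) :
    sqfreeInvTotient σ p = ((p - 1) * (p : ℝ) ^ σ)⁻¹ := by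
  rw [sqfreeInvTotient_apply, if_pos hp.prime.squarefree, Nat.totient_prime hp,
    Nat.cast_pred hp.pos]

lemma sqfreeInvTotient_nonneg (σ : ℝ) (d : ℕ) : 0 ≤ sqfreeInvTotient σ d := by
  rw [sqfreeInvTotient_apply]
  split_ifs <;> positivity

lemma isMultiplicative_sqfreeInvTotient (σ : ℝ) : (sqfreeInvTotient σ).IsMultiplicative := by
  refine ⟨by simp [sqfreeInvTotient_apply], fun {m n} hmn => ?_⟩
  simp only [sqfreeInvTotient_apply, Nat.squarefree_mul hmn, Nat.totient_mul hmn, Nat.cast_mul,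
    Real.mul_rpow m.cast_nonneg n.cast_nonneg, ite_and]
  split_ifs <;> ring

lemma sqfreeInvTotient_div_rpow (σ τ : ℝ) (d : ℕ) :
    sqfreeInvTotient σ d / (d : ℝ) ^ τ = sqfreeInvTotient (σ + τ) d := by
  simp only [sqfreeInvTotient_apply]
  split_ifs with hd
  · have hd0 : (0 : ℝ) < d := Nat.cast_pos.2 (Nat.pos_of_ne_zero hd.ne_zero)
    rw [Real.rpow_add hd0, div_eq_mul_inv, ← mul_inv, mul_assoc]
  · exact zero_div _

lemma summable_sqfreeInvTotient {σ : ℝ} (hσ : 0 < σ) : Summable (sqfreeInvTotient σ) := by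
  refine summable_of_summable_norm_primes (isMultiplicative_sqfreeInvTotient σ)
    (sqfreeInvTotient_of_not_squarefree σ) ?_
  have hdom : Summable fun p : Nat.Primes => 2 * ((p : ℕ) : ℝ) ^ (-(1 + σ)) :=
    (Nat.Primes.summable_rpow.2 (by linarith)).mul_left 2
  refine hdom.of_nonneg_of_le (fun p => norm_nonneg _) fun p => ?_
  have hp : (2 : ℝ) ≤ (p : ℕ) := by exact_mod_cast p.2.two_le
  have hp0 : (0 : ℝ) < (p : ℕ) := by linarith
  rw [Real.norm_of_nonneg (sqfreeInvTotient_nonneg σ p), sqfreeInvTotient_prime σ p.2,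
    Real.rpow_neg hp0.le, Real.rpow_add hp0, Real.rpow_one, ← inv_inv (2 : ℝ), ← mul_inv,
    ← mul_assoc]
  gcongr
  linarith

lemma sum_divisors_sqfreeInvTotient_zero {m : ℕ} (hm : 0 < m) :
    ∑ d ∈ m.divisors, sqfreeInvTotient 0 d = m / m.totient := by
  have hlocal : ∀ p ∈ m.primeFactors, 1 + sqfreeInvTotient 0 p = (1 - (p : ℝ)⁻¹)⁻¹ := by
    intro p hpm
    have hp := Nat.prime_of_mem_primeFactors hpm
    have hp1 : (1 : ℝ) < p := by exact_mod_cast hp.one_lt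
    have hp0 : (p : ℝ) - 1 ≠ 0 := by linarith
    rw [sqfreeInvTotient_prime 0 hp, Real.rpow_zero]
    field_simp
    ring
  have htotient : (m.totient : ℝ) = m * ∏ p ∈ m.primeFactors, (1 - (p : ℝ)⁻¹) := by
    have hcast := congrArg (Rat.cast : ℚ → ℝ) m.totient_eq_mul_prod_factors
    push_cast at hcast
    exact hcast
  have hm0 : (m : ℝ) ≠ 0 := Nat.cast_ne_zero.2 hm.ne'
  rw [sum_divisors_eq_prod_primeFactors_one_add (isMultiplicative_sqfreeInvTotient 0)
    (sqfreeInvTotient_of_not_squarefree 0) hm.ne', prod_congr rfl hlocal, prod_inv_distrib,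
    htotient, div_mul_cancel_left₀ hm0]

lemma hasProd_primes_tsum_inv_pow {k : ℕ} (hk : 1 < k) :
    HasProd (fun p : Nat.Primes => (1 - (((p : ℕ) : ℝ) ^ k)⁻¹)⁻¹)
      (∑' n : ℕ, ((n + 1 : ℝ) ^ k)⁻¹) := by
  have hk0 : k ≠ 0 := by lia
  let f : ℕ →*₀ ℝ := invMonoidWithZeroHom.comp <|
    (powMonoidWithZeroHom hk0).comp (Nat.castRingHom ℝ).toMonoidWithZeroHom
  have hf : ∀ n : ℕ, f n = ((n : ℝ) ^ k)⁻¹ := fun _ => rfl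
  have hsum : Summable f := (Real.summable_nat_pow_inv.2 hk :)
  have htsum : ∑' n : ℕ, ((n + 1 : ℝ) ^ k)⁻¹ = ∑' n, f n := by
    rw [hsum.tsum_eq_zero_add, map_zero, zero_add]
    simp only [hf, Nat.cast_add_one]
  rw [htsum]
  exact EulerProduct.eulerProduct_completely_multiplicative_hasProd hsum.norm

lemma euler_factor_zeta_two_mul_three {x : ℝ} (hx : 1 < x) :
    (1 - (x ^ 2)⁻¹)⁻¹ * (1 - (x ^ 3)⁻¹)⁻¹ = (1 + ((x - 1) * x)⁻¹) * (1 - (x ^ 6)⁻¹)⁻¹ := by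
  have hx1 : x - 1 ≠ 0 := by linarith
  have hpow : ∀ {k : ℕ}, k ≠ 0 → 1 - (x ^ k)⁻¹ ≠ 0 := fun hk =>
    (sub_pos.2 (inv_lt_one_of_one_lt₀ (one_lt_pow₀ hx hk))).ne'
  rw [← mul_inv, ← div_eq_mul_inv, eq_div_iff (hpow (by norm_num)), inv_mul_eq_iff_eq_mul₀
    (mul_ne_zero (hpow two_ne_zero) (hpow three_ne_zero))]
  field_simp
  ring

lemma zeta_two_mul_zeta_three_div_zeta_six_eq_tsum :
    (∑' k : ℕ, ((k + 1 : ℝ) ^ 2)⁻¹) * (∑' k : ℕ, ((k + 1 : ℝ) ^ 3)⁻¹) /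
      (∑' k : ℕ, ((k + 1 : ℝ) ^ 6)⁻¹) = ∑' d, sqfreeInvTotient 1 d := by
  have hzeta6 : 0 < ∑' k : ℕ, ((k + 1 : ℝ) ^ 6)⁻¹ := by
    have hsum : Summable fun k : ℕ => ((k + 1 : ℝ) ^ 6)⁻¹ := by
      exact_mod_cast (summable_nat_add_iff 1).2 (Real.summable_nat_pow_inv (p := 6).2 (by norm_num))
    exact hsum.tsum_pos (fun k => by positivity) 0 (by norm_num)
  have hlocal : ∀ p : Nat.Primes, (1 - (((p : ℕ) : ℝ) ^ 2)⁻¹)⁻¹ * (1 - (((p : ℕ) : ℝ) ^ 3)⁻¹)⁻¹ =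
      (1 + sqfreeInvTotient 1 p) * (1 - (((p : ℕ) : ℝ) ^ 6)⁻¹)⁻¹ := fun p => by
    rw [sqfreeInvTotient_prime 1 p.2, Real.rpow_one]
    exact euler_factor_zeta_two_mul_three (by exact_mod_cast p.2.one_lt)
  have hleft := (hasProd_primes_tsum_inv_pow (k := 2) (by norm_num)).mul
    (hasProd_primes_tsum_inv_pow (k := 3) (by norm_num))
  have hright := (hasProd_one_add_primes (isMultiplicative_sqfreeInvTotient 1)
    (sqfreeInvTotient_of_not_squarefree 1) (summable_sqfreeInvTotient one_pos)).mul
    (hasProd_primes_tsum_inv_pow (k := 6) (by norm_num))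
  exact (div_eq_iff hzeta6.ne').2 (hleft.unique (funext hlocal ▸ hright))

lemma summable_sqfreeInvTotient_zero_div_sqrt :
    Summable fun d : ℕ => sqfreeInvTotient 0 d / √(d : ℝ) := by
  simpa only [Real.sqrt_eq_rpow, sqfreeInvTotient_div_rpow, zero_add] using
    summable_sqfreeInvTotient one_half_pos

lemma divisorSumSublevel_sqfreeInvTotient_zero (N : ℕ) :
    divisorSumSublevel (sqfreeInvTotient 0) N = {m | 0 < m ∧ m.totient ≤ N} := by
  ext m
  refine and_congr_right fun hm => ?_
  have hm0 : (0 : ℝ) < m := Nat.cast_pos.2 hm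
  have hφ : (0 : ℝ) < m.totient := Nat.cast_pos.2 (Nat.totient_pos.2 hm)
  rw [sum_divisors_sqfreeInvTotient_zero hm, ← mul_div_assoc, le_div_iff₀ hφ, mul_comm,
    mul_le_mul_iff_left₀ hm0, Nat.cast_le]

lemma sum_totientFiberCard_eq_ncard (N : ℕ) :
    ∑ n ∈ Icc 1 N, totientFiberCard n = {m : ℕ | 0 < m ∧ m.totient ≤ N}.ncard := by
  have hfin : {m : ℕ | 0 < m ∧ m.totient ≤ N}.Finite :=
    divisorSumSublevel_sqfreeInvTotient_zero N ▸ finite_divisorSumSublevel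
      (sqfreeInvTotient_nonneg 0) summable_sqfreeInvTotient_zero_div_sqrt N.cast_nonneg
  have hmaps : ∀ m ∈ hfin.toFinset, m.totient ∈ Icc 1 N := fun m hm =>
    have ⟨hm0, hle⟩ := hfin.mem_toFinset.1 hm
    mem_Icc.2 ⟨Nat.totient_pos.2 hm0, hle⟩
  rw [Set.ncard_eq_toFinset_card _ hfin, card_eq_sum_card_fiberwise hmaps]
  refine sum_congr rfl fun n hn => ?_
  rw [totientFiberCard, ← Nat.card_eq_finsetCard]
  refine Nat.card_congr (Equiv.subtypeEquivRight fun m => ?_)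
  rw [mem_filter, hfin.mem_toFinset]
  exact ⟨fun ⟨hm, h⟩ => ⟨⟨hm, h ▸ (mem_Icc.1 hn).2⟩, h⟩, fun ⟨⟨hm, _⟩, h⟩ => ⟨hm, h⟩⟩

end

/-- **Erdős–Dressler–Bateman mean value theorem.**  The averages
`(1/N) ∑_{n=1}^N t(n)` of the totient multiplicity function converge to
`ζ(2)ζ(3)/ζ(6) = (∑_{k≥1} k^{−2})(∑_{k≥1} k^{−3})/(∑_{k≥1} k^{−6})`. -/
theorem totient_multiplicity_mean_value :
    Filter.Tendsto
      (fun N : ℕ => (1 / (N : ℝ)) * ∑ n ∈ Finset.Icc 1 N, (totientFiberCard n : ℝ))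
      Filter.atTop
      (nhds ((∑' k : ℕ, ((k + 1 : ℝ) ^ 2)⁻¹) * (∑' k : ℕ, ((k + 1 : ℝ) ^ 3)⁻¹) /
        (∑' k : ℕ, ((k + 1 : ℝ) ^ 6)⁻¹))) := by
  have hsum : ∑' d : ℕ, sqfreeInvTotient 0 d / (d : ℝ) = ∑' d, sqfreeInvTotient 1 d :=
    tsum_congr fun d => by
      simpa only [Real.rpow_one, zero_add] using sqfreeInvTotient_div_rpow 0 1 d
  have hlim := (tendsto_ncard_divisorSumSublevel_div (sqfreeInvTotient_nonneg 0)
    summable_sqfreeInvTotient_zero_div_sqrt).comp tendsto_natCast_atTop_atTop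
  rw [hsum, ← zeta_two_mul_zeta_three_div_zeta_six_eq_tsum] at hlim
  refine hlim.congr fun N => ?_
  rw [Function.comp_apply, divisorSumSublevel_sqfreeInvTotient_zero,
    ← sum_totientFiberCard_eq_ncard, Nat.cast_sum, one_div_mul_eq_div]
end
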